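/- arXiv:math/0503259 — 2 statements merged into one kernel-verified Lean document; each statement's English description precedes it below -/
import Mathlib

section
/- If F_1,…,F_m form a regular sequence in the local ring O_x of germs of holomorphic functions at a point x ∈ ℂ^n, and N is the product of positive integers bounding the orders appropriately (specifically N as in Shiffman's lemma), then the N-th power of the radical of the ideal (F_1,…,F_m)_x is contained in (F_1,…,F_m)_x: (√((F)_x))^N ⊆ (F)_x. -/
open MvPolynomial Filter

/-- The local ring `O_x` of germs of holomorphic functions at `x ∈ ℂ^n`, realized as the
subring of germs at `x` of `ℂ`-valued functions admitting a representative that is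
analytic at `x`. -/
def HoloGermAt (n : ℕ) (x : Fin n → ℂ) : Subring (Filter.Germ (nhds x) ℂ) where
  carrier := {g | ∃ f : (Fin n → ℂ) → ℂ, AnalyticAt ℂ f x ∧ g = (f : Filter.Germ (nhds x) ℂ)}
  mul_mem' := by
    rintro a b ⟨f, hf, rfl⟩ ⟨g, hg, rfl⟩
    exact ⟨f * g, hf.mul hg, rfl⟩
  one_mem' := ⟨1, analyticAt_const, rfl⟩
  add_mem' := by
    rintro a b ⟨f, hf, rfl⟩ ⟨g, hg, rfl⟩
    exact ⟨f + g, hf.add hg, rfl⟩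
  zero_mem' := ⟨0, analyticAt_const, rfl⟩
  neg_mem' := by
    rintro a ⟨f, hf, rfl⟩
    exact ⟨-f, hf.neg, rfl⟩

/-!
The heart of the matter is a local Bézout bound. If `n` polynomials `F₁, …, Fₙ` form a regular
sequence in `A = O_x`, then the products of monomials in the `Fᵢ` with polynomials independent
modulo `(F)` are again linearly independent, so comparing the number of those of degree at most
`E` with the number of all monomials of degree at most `E`, as `E → ∞`, gives
`dim A ⧸ (F) ≤ ∏ deg Fᵢ = N`. A nilpotent element of a ring of dimension `N` over its residue field
has vanishing `N`-th power.

For fewer equations, generic linear forms `l` can be adjoined to the regular sequence without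
changing `N`. When `A ⧸ (F)` has dimension one and `h ∈ √(F)`, the images of the colon ideals
`(F) : h ^ i` in `A ⧸ ((F) + (l))` stabilize within `N` steps, hence so do the colon ideals
themselves by Nakayama's lemma, and `h ^ N ∈ (F)`. In higher dimension `h ^ N` lies in `(F) + (l)`
for all generic `l`, which Krull's intersection theorem turns into `h ^ N ∈ (F)`. Polarization, in
characteristic zero, passes from `N`-th powers to products of `N` elements of the radical.

The argument takes place in a Noetherian local ring whose centred coordinates form a regular
sequence generating the maximal ideal. To see that `O_x` is one, germs are written as `ℓ¹` power
series in rescaled coordinates. Rescaling by powers of distinct primes makes the leading monomial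
of a series dominate, so that division with remainder amounts to inverting a perturbation of the
identity by a Neumann series, and Dickson's lemma makes every ideal finitely generated.
-/

open RingTheory.Sequence IsLocalRing Topology

open scoped lp

universe u v

section RegularSequence

variable {A : Type u} [CommRing A]

lemma isWeaklyRegular_append_singleton_iff (as : List A) (a : A) :
    IsWeaklyRegular A (as ++ [a]) ↔
      IsWeaklyRegular A as ∧ IsSMulRegular (A ⧸ Ideal.ofList as) a := by
  rw [isWeaklyRegular_append_iff, isWeaklyRegular_singleton_iff, smul_eq_mul, Ideal.mul_top]

open CategoryTheory Abelian in
/-- Each element of the regular sequence `as` costs one degree of vanishing of `Ext`, by the long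
exact sequence; in degree `0` the vanishing of `Hom` produces the regular element. -/
lemma exists_mem_annihilator_isSMulRegular_of_subsingleton_ext [IsNoetherianRing A]
    (K : ModuleCat.{u} A) [Module.Finite A K] (as : List A) (M : ModuleCat.{u} A)
    [Module.Finite A M] (has : IsWeaklyRegular M as)
    (hExt : ∀ i ≤ as.length, Subsingleton (Ext K M i)) :
    ∃ c ∈ Module.annihilator A K,
      IsSMulRegular (M ⧸ (Ideal.ofList as • ⊤ : Submodule A M)) c := by
  induction as generalizing M with
  | nil =>
    have : Subsingleton (K ⟶ M) := Ext.addEquiv₀.subsingleton_congr.mp (hExt 0 le_rfl)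
    have : Subsingleton (K →ₗ[A] M) := ModuleCat.homAddEquiv.symm.subsingleton
    obtain ⟨c, hcK, hcM⟩ := IsSMulRegular.subsingleton_linearMap_iff.mp this
    exact ⟨c, hcK, ((Submodule.quotEquivOfEqBot _ (by simp)).isSMulRegular_congr c).mpr hcM⟩
  | cons a as ih =>
    rw [isWeaklyRegular_cons_iff] at has
    obtain ⟨c, hcK, hcM⟩ := ih (ModuleCat.of A (QuotSMulTop a M)) has.2 fun i hi => by
      have zero₁ := AddCommGrpCat.isZero_of_iff_subsingleton.mpr (hExt i (Nat.le_succ_of_le hi))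
      have zero₂ :=
        AddCommGrpCat.isZero_of_iff_subsingleton.mpr (hExt (i + 1) (Nat.succ_le_succ hi))
      exact AddCommGrpCat.subsingleton_of_isZero <| ShortComplex.Exact.isZero_of_both_zeros
        ((Ext.covariant_sequence_exact₃' K has.1.smulShortComplex_shortExact) i (i + 1) rfl)
        (zero₁.eq_zero_of_src _) (zero₂.eq_zero_of_tgt _)
    exact ⟨c, hcK,
      ((Submodule.quotOfListConsSMulTopEquivQuotSMulTopInner M a as).isSMulRegular_congr c).mpr hcM⟩

lemma exists_mem_maximalIdeal_isSMulRegular_of_length_lt [IsLocalRing A] [IsNoetherianRing A]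
    {as zs : List A} (has : IsWeaklyRegular A as) (hzs : IsWeaklyRegular A zs)
    (hmem : ∀ z ∈ zs, z ∈ maximalIdeal A) (hlt : as.length < zs.length) :
    ∃ c ∈ maximalIdeal A, IsSMulRegular (A ⧸ Ideal.ofList as) c := by
  have hlt_top : (maximalIdeal A • ⊤ : Submodule A A) < ⊤ := by
    rw [smul_eq_mul, Ideal.mul_top]
    exact (maximalIdeal.isMaximal A).ne_top.lt_top
  have hExt := ModuleCat.subsingleton_ext_of_exists_isRegular (maximalIdeal A)
    (ModuleCat.of A (A ⧸ maximalIdeal A))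
    (by rw [Module.support_eq_zeroLocus]; simp [Ideal.annihilator_quotient])
    (ModuleCat.of A A) hlt_top zs hmem (IsRegular.of_isWeaklyRegular_of_mem_maximalIdeal A hmem hzs)
  obtain ⟨c, hc, hreg⟩ := exists_mem_annihilator_isSMulRegular_of_subsingleton_ext
    (ModuleCat.of A (A ⧸ maximalIdeal A)) as (ModuleCat.of A A) has
    fun i hi => hExt i (hi.trans_lt hlt)
  refine ⟨c, by simpa [Ideal.annihilator_quotient] using hc, ?_⟩
  rwa [smul_eq_mul, Ideal.mul_top] at hreg

/-- Prime avoidance: the coefficient vectors of the linear combinations in a given associated prime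
form a proper subspace, and finitely many proper subspaces do not cover `ι → k`. -/
lemma exists_isSMulRegular_linearCombination (k : Type v) [Field k] [Infinite k] [Algebra k A]
    [IsNoetherianRing A] (M : Type*) [AddCommGroup M] [Module A M] [Module.Finite A M]
    {ι : Type*} [Fintype ι] (t : ι → A)
    (h : ∃ c ∈ Ideal.span (Set.range t), IsSMulRegular M c) :
    ∃ c : ι → k, IsSMulRegular M (∑ i, c i • t i) := by
  classical
  obtain ⟨c₀, hc₀, hreg⟩ := h
  have mem_iff (a : A) : ¬ IsSMulRegular M a ↔ ∃ P ∈ associatedPrimes A M, a ∈ P := by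
    simpa using (Set.ext_iff.mp (biUnion_associatedPrimes_eq_compl_regular A M) a).symm
  let W (P : Ideal A) : Subspace k (ι → k) :=
    (P.restrictScalars k).comap (Fintype.linearCombination k t)
  have hfin : (W '' associatedPrimes A M).Finite := (associatedPrimes.finite A M).image W
  have hproper : ⊤ ∉ hfin.toFinset := by
    rw [Set.Finite.mem_toFinset]
    rintro ⟨P, hP, htop⟩
    have ht (i : ι) : t i ∈ P := by
      have : Pi.single i (1 : k) ∈ W P := htop ▸ Submodule.mem_top
      simpa [W] using this
    exact (mem_iff c₀).mpr ⟨P, hP, Ideal.span_le.mpr (Set.range_subset_iff.mpr ht) hc₀⟩ hreg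
  obtain ⟨c, hc⟩ := (Set.ne_univ_iff_exists_notMem _).mp
    (Subspace.biUnion_ne_univ_of_top_notMem hproper)
  refine ⟨c, by_contra fun hcon => hc ?_⟩
  obtain ⟨P, hP, hmem⟩ := (mem_iff _).mp hcon
  simp only [Set.mem_iUnion]
  refine ⟨W P, by simpa using ⟨P, hP, rfl⟩, ?_⟩
  simpa [W, Fintype.linearCombination_apply] using hmem

lemma exists_isSMulRegular_linearCombination_of_length_lt (k : Type v) [Field k] [Infinite k]
    [Algebra k A] [IsLocalRing A] [IsNoetherianRing A] {n : ℕ} {t : Fin n → A}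
    (ht : Ideal.span (Set.range t) = maximalIdeal A) (htreg : IsWeaklyRegular A (List.ofFn t))
    {as : List A} (has : IsWeaklyRegular A as) (hlt : as.length < n) :
    ∃ c : Fin n → k, IsSMulRegular (A ⧸ Ideal.ofList as) (∑ i, c i • t i) := by
  refine exists_isSMulRegular_linearCombination k _ t ?_
  rw [ht]
  refine exists_mem_maximalIdeal_isSMulRegular_of_length_lt has htreg ?_ (by simpa using hlt)
  rw [List.forall_mem_ofFn_iff]
  exact fun i => ht ▸ Ideal.subset_span ⟨i, rfl⟩

end RegularSequence

section LinearIndependent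

variable {k A : Type*} [CommRing k] [CommRing A] [Algebra k A]

lemma linearIndependent_quotient_mk_iff {ι : Type*} {I : Ideal A} {v : ι → A} :
    LinearIndependent k (fun i => Ideal.Quotient.mk I (v i)) ↔
      ∀ c : ι →₀ k, Finsupp.linearCombination k v c ∈ I → c = 0 := by
  have hmk (c : ι →₀ k) : Finsupp.linearCombination k (fun i => Ideal.Quotient.mk I (v i)) c =
      Ideal.Quotient.mk I (Finsupp.linearCombination k v c) :=
    (Finsupp.apply_linearCombination k (Ideal.Quotient.mkₐ k I).toLinearMap v c).symm
  simp only [linearIndependent_iff, hmk, Ideal.Quotient.eq_zero_iff_mem]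

/-- Reduce modulo `a` to see that the coefficients of `a ^ 0` vanish, then divide by `a`. -/
lemma eq_zero_of_sum_pow_mul_linearCombination_mem {κ : Type*} {I : Ideal A} {a : A} {v : κ → A}
    (ha : IsSMulRegular (A ⧸ I) a)
    (hv : LinearIndependent k (fun i => Ideal.Quotient.mk (I ⊔ Ideal.span {a}) (v i)))
    {J : ℕ} {w : ℕ → κ →₀ k}
    (hw : ∑ j ∈ Finset.range J, a ^ j * Finsupp.linearCombination k v (w j) ∈ I) :
    ∀ j < J, w j = 0 := by
  induction J generalizing w with
  | zero => simp
  | succ J ih =>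
    let rest := ∑ j ∈ Finset.range J, a ^ j * Finsupp.linearCombination k v (w (j + 1))
    have hsum : a * rest + Finsupp.linearCombination k v (w 0) ∈ I := by
      convert hw using 1
      simp only [rest, Finset.sum_range_succ', Finset.mul_sum, pow_succ', mul_assoc, pow_zero,
        one_mul]
    have hw₀ : w 0 = 0 := linearIndependent_quotient_mk_iff.mp hv _ <| by
      rw [← add_sub_cancel_left (a * rest) (Finsupp.linearCombination k v (w 0))]
      exact sub_mem (Ideal.mem_sup_left hsum)
        (Ideal.mem_sup_right (Ideal.mem_span_singleton.mpr ⟨rest, rfl⟩))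
    have hrest : rest ∈ I := mem_of_isSMulRegular_quotient_of_smul_mem ha
      (by simpa [hw₀] using hsum)
    rintro (_ | j) hj
    · exact hw₀
    · exact ih (w := fun j => w (j + 1)) hrest j (Nat.lt_of_succ_lt_succ hj)

lemma linearIndependent_quotient_mk_pow_mul {κ : Type*} {I : Ideal A} {a : A} {v : κ → A}
    (ha : IsSMulRegular (A ⧸ I) a)
    (hv : LinearIndependent k (fun i => Ideal.Quotient.mk (I ⊔ Ideal.span {a}) (v i))) :
    LinearIndependent k (fun p : ℕ × κ => Ideal.Quotient.mk I (a ^ p.1 * v p.2)) := by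
  refine linearIndependent_quotient_mk_iff.mpr fun c hc => ?_
  obtain ⟨J, hJ⟩ := Finset.exists_nat_subset_range c.curry.support
  have hrows := eq_zero_of_sum_pow_mul_linearCombination_mem ha hv (J := J) (w := c.curry) <| by
    convert hc using 1
    rw [← Finsupp.sum_of_support_subset c.curry hJ
        (fun j w => a ^ j * Finsupp.linearCombination k v w) (by simp),
      Finsupp.linearCombination_apply,
      ← Finsupp.sum_curry_index c (fun j i r => r • (a ^ j * v i))]
    simp only [Finsupp.linearCombination_apply, Finsupp.mul_sum, mul_smul_comm]
  have hcurry : c.curry = 0 := by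
    rw [← Finsupp.support_eq_empty, Finset.eq_empty_iff_forall_notMem]
    exact fun j hj => Finsupp.mem_support_iff.mp hj (hrows j (Finset.mem_range.mp (hJ hj)))
  ext ⟨j, i⟩
  exact DFunLike.congr_fun (DFunLike.congr_fun hcurry j) i

lemma linearIndependent_prod_pow_mul {m : ℕ} {f : Fin m → A}
    (hf : IsWeaklyRegular A (List.ofFn f)) {ι : Type*} {u : ι → A}
    (hu : LinearIndependent k (fun i => Ideal.Quotient.mk (Ideal.ofList (List.ofFn f)) (u i))) :
    LinearIndependent k (fun p : (Fin m → ℕ) × ι => (∏ j, f j ^ p.1 j) * u p.2) := by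
  induction m generalizing ι u with
  | zero =>
    rw [List.ofFn_zero, Ideal.ofList_nil, linearIndependent_quotient_mk_iff] at hu
    refine (linearIndependent_equiv' (Equiv.uniqueProd ι (Fin 0 → ℕ)) ?_).mpr
      (linearIndependent_iff.mpr hu)
    funext p
    simp [Equiv.uniqueProd]
  | succ m ih =>
    rw [List.ofFn_succ', List.concat_eq_append] at hf hu
    rw [isWeaklyRegular_append_singleton_iff] at hf
    rw [Ideal.ofList_append, Ideal.ofList_singleton] at hu
    let e : (Fin (m + 1) → ℕ) × ι ≃ (Fin m → ℕ) × (ℕ × ι) :=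
      (((Fin.snocEquiv fun _ => ℕ).symm.trans (Equiv.prodComm _ _)).prodCongr
        (Equiv.refl ι)).trans (Equiv.prodAssoc _ _ _)
    refine (linearIndependent_equiv' e ?_).mpr
      (ih hf.1 (linearIndependent_quotient_mk_pow_mul hf.2 hu))
    funext p
    simp [e, Fin.prod_univ_castSucc, mul_assoc, Fin.snocEquiv, Fin.init]

end LinearIndependent

section Counting

/-- The lattice points `β` of the simplex `∑ i, d i * β i ≤ E`. The bound `β i ≤ E`, which makes
the set finite, is automatic when all weights `d i` are positive. -/
def latticeSimplex {ι : Type*} [Fintype ι] [DecidableEq ι] (d : ι → ℕ) (E : ℕ) : Finset (ι → ℕ) :=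
  {β ∈ Fintype.piFinset fun _ => Finset.range (E + 1) | ∑ i, d i * β i ≤ E}

variable {ι : Type*} [Fintype ι] [DecidableEq ι]

lemma mem_latticeSimplex {d : ι → ℕ} (hd : ∀ i, 0 < d i) {E : ℕ} {β : ι → ℕ} :
    β ∈ latticeSimplex d E ↔ ∑ i, d i * β i ≤ E := by
  simp only [latticeSimplex, Finset.mem_filter, Fintype.mem_piFinset, Finset.mem_range,
    and_iff_right_iff_imp, Nat.lt_succ_iff]
  intro h i
  calc β i ≤ d i * β i := Nat.le_mul_of_pos_left _ (hd i)
    _ ≤ ∑ i, d i * β i :=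
      Finset.single_le_sum (f := fun i => d i * β i) (fun _ _ => Nat.zero_le _) (Finset.mem_univ i)
    _ ≤ E := h

lemma card_latticeSimplex_le (d : ι → ℕ) (E : ℕ) :
    (latticeSimplex d E).card ≤ (E + 1) ^ Fintype.card ι :=
  (Finset.card_filter_le _ _).trans (by simp)

/-- Divide `β i` by `d i` with remainder: the quotients lie in the weighted simplex and there are
`∏ i, d i` possible remainders. -/
lemma card_latticeSimplex_one_le {d : ι → ℕ} (hd : ∀ i, 0 < d i) (E : ℕ) :
    (latticeSimplex (1 : ι → ℕ) E).card ≤ (∏ i, d i) * (latticeSimplex d E).card := by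
  apply Finset.card_le_mul_card_image_of_maps_to (f := fun β i => β i / d i)
  · intro β hβ
    simp only [mem_latticeSimplex (d := 1) (fun _ => Nat.one_pos), Pi.one_apply, one_mul] at hβ
    rw [mem_latticeSimplex hd]
    exact (Finset.sum_le_sum fun i _ => Nat.mul_div_le (β i) (d i)).trans hβ
  · intro α _
    have hcard : (Fintype.piFinset fun i => Finset.range (d i)).card = ∏ i, d i := by simp
    rw [← hcard]
    apply Finset.card_le_card_of_injOn (fun β i => β i % d i)
    · intro β _
      simpa using fun i => Nat.mod_lt (β i) (hd i)
    · intro β hβ γ hγ hmod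
      simp only [Finset.coe_filter, Set.mem_ofPred_eq] at hβ hγ
      funext i
      have hdiv : β i / d i = γ i / d i := congrFun (hβ.2.trans hγ.2.symm) i
      have hmod : β i % d i = γ i % d i := congrFun hmod i
      rw [← Nat.div_add_mod (β i) (d i), ← Nat.div_add_mod (γ i) (d i), hdiv, hmod]

lemma finrank_restrictTotalDegree (k : Type*) [CommRing k] [Nontrivial k] (E : ℕ) :
    Module.finrank k (restrictTotalDegree ι k E) = (latticeSimplex (1 : ι → ℕ) E).card := by
  rw [restrictTotalDegree, Module.finrank_eq_nat_card_basis (basisRestrictSupport k _),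
    ← Nat.card_eq_finsetCard]
  refine Nat.card_congr (Equiv.subtypeEquiv Finsupp.equivFunOnFinite fun β => ?_)
  simp [mem_latticeSimplex, Finsupp.sum_fintype]

/-- If `N < M`, then `H (D * j)` grows at least like `(M / N) ^ j`, hence is not polynomially
bounded. -/
lemma le_of_mul_le_mul_shift {H : ℕ → ℕ} {n : ℕ} (H_zero : 0 < H 0)
    (H_le : ∀ E, H E ≤ (E + 1) ^ n) {M N : ℕ} (hN : 0 < N) {D : ℕ}
    (hMN : ∀ E, M * H E ≤ N * H (E + D)) : M ≤ N := by
  by_contra! hlt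
  have hN' : (0 : ℝ) < N := Nat.cast_pos.mpr hN
  have hq : 1 < (M / N : ℝ) := (one_lt_div hN').mpr (Nat.cast_lt.mpr hlt)
  have exp_le (j : ℕ) : (M / N : ℝ) ^ j ≤ H (D * j) := by
    induction j with
    | zero => simpa using Nat.succ_le_iff.mpr H_zero
    | succ j ih =>
      have hstep : (M / N : ℝ) * H (D * j) ≤ H (D * j + D) := by
        rw [div_mul_eq_mul_div, div_le_iff₀' hN']
        exact_mod_cast hMN (D * j)
      calc (M / N : ℝ) ^ (j + 1) = M / N * (M / N : ℝ) ^ j := pow_succ' _ _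
        _ ≤ M / N * H (D * j) := by gcongr
        _ ≤ H (D * (j + 1)) := hstep
  have le_poly {j : ℕ} (hj : 1 ≤ j) : (H (D * j) : ℝ) ≤ (D + 1) ^ n * j ^ n := by
    rw [← mul_pow]
    calc (H (D * j) : ℝ) ≤ (D * j + 1) ^ n := by exact_mod_cast H_le (D * j)
      _ ≤ ((D + 1) * j) ^ n := by
        have : (1 : ℝ) ≤ j := by exact_mod_cast hj
        gcongr
        linarith
  have hlim := tendsto_pow_const_div_const_pow_of_one_lt n hq
  have hpos : (0 : ℝ) < 1 / (D + 1) ^ n := by positivity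
  obtain ⟨j, hj, hj₁⟩ := ((hlim.eventually_lt_const hpos).and (eventually_ge_atTop 1)).exists
  rw [div_lt_div_iff₀ (by positivity) (by positivity)] at hj
  linarith [(exp_le j).trans (le_poly hj₁)]

/-- The products of monomials in the `f i` with the `e j` are linearly independent polynomials, so
their number in each degree is at most the dimension of the space of polynomials of that degree. -/
lemma card_le_prod_totalDegree {k A : Type*} [CommRing k] [Nontrivial k] [CommRing A]
    [Algebra k A] {n : ℕ} {w : Fin n → A} {f : Fin n → MvPolynomial (Fin n) k}
    (hdeg : ∀ i, 0 < (f i).totalDegree)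
    (hf : IsWeaklyRegular A (List.ofFn fun i => aeval w (f i)))
    {κ : Type*} [Fintype κ] {e : κ → MvPolynomial (Fin n) k}
    (he : LinearIndependent k fun j =>
      Ideal.Quotient.mk (Ideal.ofList (List.ofFn fun i => aeval w (f i))) (aeval w (e j))) :
    Fintype.card κ ≤ ∏ i, (f i).totalDegree := by
  let d : Fin n → ℕ := fun i => (f i).totalDegree
  let D := Finset.univ.sup fun j => (e j).totalDegree
  have hindep : LinearIndependent k fun p : (Fin n → ℕ) × κ => (∏ i, f i ^ p.1 i) * e p.2 := by
    apply LinearIndependent.of_comp (aeval w).toLinearMap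
    simpa [Function.comp_def] using linearIndependent_prod_pow_mul hf he
  refine le_of_mul_le_mul_shift (H := fun E => (latticeSimplex (1 : Fin n → ℕ) E).card) (D := D)
    (Finset.card_pos.mpr ⟨0, by simp [mem_latticeSimplex]⟩)
    (fun E => card_latticeSimplex_le _ E) (Finset.prod_pos fun i _ => hdeg i) fun E => ?_
  have hmem (p : latticeSimplex d E × κ) :
      (∏ i, f i ^ (p.1 : Fin n → ℕ) i) * e p.2 ∈ restrictTotalDegree (Fin n) k (E + D) := by
    rw [mem_restrictTotalDegree]
    refine (totalDegree_mul _ _).trans (add_le_add ?_ ?_)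
    · refine (totalDegree_finsetProd _ _).trans
        (le_trans (Finset.sum_le_sum fun i _ => ?_) ((mem_latticeSimplex hdeg).mp p.1.2))
      exact (totalDegree_pow _ _).trans_eq (mul_comm _ _)
    · exact Finset.le_sup (f := fun j => (e j).totalDegree) (Finset.mem_univ p.2)
  have hrestrict : LinearIndependent k fun p : latticeSimplex d E × κ =>
      (⟨_, hmem p⟩ : restrictTotalDegree (Fin n) k (E + D)) :=
    .of_comp (Submodule.subtype _) <| hindep.comp (Prod.map Subtype.val id)
      (Subtype.val_injective.prodMap Function.injective_id)
  have hcard := hrestrict.fintype_card_le_finrank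
  rw [finrank_restrictTotalDegree, Fintype.card_prod, Fintype.card_coe] at hcard
  calc Fintype.card κ * (latticeSimplex 1 E).card
      ≤ Fintype.card κ * ((∏ i, d i) * (latticeSimplex d E).card) := by
        gcongr
        exact card_latticeSimplex_one_le hdeg E
    _ = (∏ i, d i) * ((latticeSimplex d E).card * Fintype.card κ) := by ring
    _ ≤ (∏ i, d i) * (latticeSimplex 1 (E + D)).card := by gcongr

end Counting

section LocalBezout

variable {k A : Type*} [Field k] [CommRing A] [IsLocalRing A] [Algebra k A]

lemma exists_sub_algebraMap_mem_maximalIdeal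
    (hres : Function.Surjective (algebraMap k (ResidueField A))) (a : A) :
    ∃ c : k, a - algebraMap k A c ∈ maximalIdeal A := by
  obtain ⟨c, hc⟩ := hres (residue A a)
  refine ⟨c, (residue_eq_zero_iff _).mp ?_⟩
  rw [map_sub, ← hc, sub_eq_zero]
  rfl

lemma algebraMap_add_isUnit {c : k} (hc : c ≠ 0) {a : A} (ha : a ∈ maximalIdeal A) :
    IsUnit (algebraMap k A c + a) := by
  by_contra hcon
  have hmem : algebraMap k A c ∈ maximalIdeal A := by
    simpa using sub_mem ((mem_maximalIdeal _).mpr hcon) ha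
  exact (mem_maximalIdeal _).mp hmem (hc.isUnit.map _)

/-- A polynomial relation for `t` is `t ^ j` times a polynomial with nonzero constant coefficient,
and the latter takes a unit value at `t`. -/
lemma mem_radical_of_isAlgebraic_quotient_mk {I : Ideal A} {t : A} (ht : t ∈ maximalIdeal A)
    (halg : IsAlgebraic k (Ideal.Quotient.mk I t)) : t ∈ I.radical := by
  obtain ⟨p, hp, hpt⟩ := halg
  obtain ⟨q, hpq, hq⟩ := p.exists_eq_pow_rootMultiplicity_mul_and_not_dvd hp 0
  rw [map_zero, sub_zero] at hpq hq
  rw [Polynomial.X_dvd_iff] at hq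
  have hunit : IsUnit (Polynomial.aeval t q) := by
    rw [← Polynomial.divX_mul_X_add q, map_add, Polynomial.aeval_C, add_comm]
    refine algebraMap_add_isUnit hq ?_
    rw [map_mul, Polynomial.aeval_X]
    exact Ideal.mul_mem_left _ _ ht
  have hpt' : Polynomial.aeval t p ∈ I := by
    rw [← Ideal.Quotient.eq_zero_iff_mem, ← hpt]
    exact (Polynomial.aeval_algHom_apply (Ideal.Quotient.mkₐ k I) t p).symm
  rw [hpq, map_mul, map_pow, Polynomial.aeval_X, I.mul_unit_mem_iff_mem hunit] at hpt'
  exact ⟨_, hpt'⟩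

lemma exists_sub_aeval_mem_maximalIdeal_pow
    (hres : Function.Surjective (algebraMap k (ResidueField A))) {ι : Type*} [Finite ι]
    {w : ι → A} {x : ι → k}
    (hgen : Ideal.span (Set.range fun i => w i - algebraMap k A (x i)) = maximalIdeal A)
    (e : ℕ) (a : A) : ∃ q : MvPolynomial ι k, a - aeval w q ∈ maximalIdeal A ^ e := by
  have := Fintype.ofFinite ι
  induction e generalizing a with
  | zero => exact ⟨0, by simp⟩
  | succ e ih =>
    obtain ⟨c, hc⟩ := exists_sub_algebraMap_mem_maximalIdeal hres a
    have hc' := hc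
    rw [← hgen, Ideal.mem_span_range_iff_exists_fun] at hc'
    obtain ⟨b, hb⟩ := hc'
    choose q hq using fun i => ih (b i)
    refine ⟨C c + ∑ i, q i * (X i - C (x i)), ?_⟩
    have hsub : a - aeval w (C c + ∑ i, q i * (X i - C (x i))) =
        ∑ i, (b i - aeval w (q i)) * (w i - algebraMap k A (x i)) := by
      simp only [map_add, map_sum, map_mul, map_sub, aeval_X, aeval_C,
        sub_mul (b _), Finset.sum_sub_distrib, hb]
      ring
    rw [hsub, pow_succ, ← hgen]
    exact Ideal.sum_mem _ fun i _ => Ideal.mul_mem_mul (hgen ▸ hq i) (Ideal.subset_span ⟨i, rfl⟩)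

variable {n : ℕ} {w : Fin n → A} {x : Fin n → k} {f : Fin n → MvPolynomial (Fin n) k}

lemma maximalIdeal_le_radical_of_isWeaklyRegular
    (hgen : Ideal.span (Set.range fun i => w i - algebraMap k A (x i)) = maximalIdeal A)
    (hdeg : ∀ i, 0 < (f i).totalDegree)
    (hf : IsWeaklyRegular A (List.ofFn fun i => aeval w (f i))) :
    maximalIdeal A ≤ (Ideal.ofList (List.ofFn fun i => aeval w (f i))).radical := by
  set I := Ideal.ofList (List.ofFn fun i => aeval w (f i))
  rw [← hgen, Ideal.span_le, Set.range_subset_iff]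
  intro i
  let t := w i - algebraMap k A (x i)
  have ht : t ∈ maximalIdeal A := hgen ▸ Ideal.subset_span ⟨i, rfl⟩
  refine mem_radical_of_isAlgebraic_quotient_mk (k := k) ht (by_contra fun htrans => ?_)
  have hpow : LinearIndependent k fun j : ℕ => Ideal.Quotient.mk I (t ^ j) := by
    have := (Polynomial.basisMonomials k).linearIndependent.map'
      (Polynomial.aeval (R := k) (Ideal.Quotient.mk I t)).toLinearMap
      (LinearMap.ker_eq_bot.mpr (transcendental_iff_injective.mp htrans))
    simpa [Function.comp_def] using this
  let N := ∏ i, (f i).totalDegree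
  have hcard := card_le_prod_totalDegree (κ := Fin (N + 1))
    (e := fun j => (X i - C (x i)) ^ (j : ℕ)) hdeg hf <| by
      simpa [t, I, Function.comp_def] using hpow.comp _ Fin.val_injective
  rw [Fintype.card_fin] at hcard
  exact (Nat.lt_irrefl N) hcard

/-- Modulo a power of the maximal ideal every element of `A` is a polynomial in the coordinates, so
linearly independent families in the quotient come from polynomials. -/
lemma finite_and_finrank_quotient_ofFn_le [IsNoetherianRing A]
    (hres : Function.Surjective (algebraMap k (ResidueField A)))
    (hgen : Ideal.span (Set.range fun i => w i - algebraMap k A (x i)) = maximalIdeal A)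
    (hdeg : ∀ i, 0 < (f i).totalDegree)
    (hf : IsWeaklyRegular A (List.ofFn fun i => aeval w (f i))) :
    Module.Finite k (A ⧸ Ideal.ofList (List.ofFn fun i => aeval w (f i))) ∧
    Module.finrank k (A ⧸ Ideal.ofList (List.ofFn fun i => aeval w (f i))) ≤
      ∏ i, (f i).totalDegree := by
  set I := Ideal.ofList (List.ofFn fun i => aeval w (f i))
  obtain ⟨e, he⟩ := Ideal.exists_pow_le_of_le_radical_of_fg
    (maximalIdeal_le_radical_of_isWeaklyRegular (k := k) hgen hdeg hf) (IsNoetherian.noetherian _)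
  have hsurj (a : A ⧸ I) : ∃ q : MvPolynomial (Fin n) k, Ideal.Quotient.mk I (aeval w q) = a := by
    obtain ⟨a, rfl⟩ := Ideal.Quotient.mk_surjective a
    obtain ⟨q, hq⟩ := exists_sub_aeval_mem_maximalIdeal_pow hres hgen e a
    exact ⟨q, (Ideal.Quotient.eq.mpr (he hq)).symm⟩
  choose q hq using hsurj
  have hrank : Module.rank k (A ⧸ I) ≤ (∏ i, (f i).totalDegree : ℕ) := by
    refine rank_le fun s hs => ?_
    have hval : (fun a : s => Ideal.Quotient.mk I (aeval w (q a))) = Subtype.val :=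
      funext fun a => hq a
    rw [← hval] at hs
    rw [← Fintype.card_coe]
    exact card_le_prod_totalDegree (e := fun a : s => q a) hdeg hf hs
  have hfin : Module.Finite k (A ⧸ I) :=
    Module.rank_lt_aleph0_iff.mp (hrank.trans_lt (Cardinal.natCast_lt_aleph0))
  exact ⟨hfin, by exact_mod_cast Module.finrank_eq_rank k (A ⧸ I) ▸ hrank⟩

lemma finite_and_finrank_quotient_ofList_le [IsNoetherianRing A]
    (hres : Function.Surjective (algebraMap k (ResidueField A)))
    (hgen : Ideal.span (Set.range fun i => w i - algebraMap k A (x i)) = maximalIdeal A)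
    {fs : List (MvPolynomial (Fin n) k)} (hlen : fs.length = n)
    (hdeg : ∀ f ∈ fs, 0 < f.totalDegree) (hfs : IsWeaklyRegular A (fs.map (aeval w))) :
    Module.Finite k (A ⧸ Ideal.ofList (fs.map (aeval w))) ∧
    Module.finrank k (A ⧸ Ideal.ofList (fs.map (aeval w))) ≤ (fs.map totalDegree).prod := by
  obtain ⟨f, rfl⟩ : ∃ f : Fin n → MvPolynomial (Fin n) k, fs = List.ofFn f :=
    ⟨_, (List.ofFn_get fs).symm.trans (List.ofFn_congr hlen fs.get)⟩
  rw [List.map_ofFn] at hfs ⊢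
  rw [List.map_ofFn, List.prod_ofFn]
  exact finite_and_finrank_quotient_ofFn_le hres hgen (by simpa using hdeg) hfs

end LocalBezout

section Nilpotency

variable {A : Type u} [CommRing A] {I : Ideal A}

lemma pow_mem_of_finrank_quotient_le {k : Type*} [Field k] [Algebra k A]
    [Module.Finite k (A ⧸ I)] {N : ℕ} (hN : Module.finrank k (A ⧸ I) ≤ N) {h : A}
    (hh : h ∈ I.radical) : h ^ N ∈ I := by
  obtain ⟨e, he⟩ := hh
  have hker (j : ℕ) :
      1 ∈ LinearMap.ker (LinearMap.mulLeft k (Ideal.Quotient.mk I h) ^ j) ↔ h ^ j ∈ I := by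
    rw [LinearMap.mem_ker, LinearMap.pow_mulLeft, LinearMap.mulLeft_apply, mul_one, ← map_pow,
      Ideal.Quotient.eq_zero_iff_mem]
  refine I.pow_mem_of_pow_mem ((hker _).mp ?_) hN
  exact Module.End.ker_pow_le_ker_pow_finrank _ e ((hker e).mpr he)

lemma exists_le_finrank_succ_le_of_monotone {k V : Type*} [Field k] [AddCommGroup V] [Module k V]
    [Module.Finite k V] {W : ℕ → Submodule k V} (hW : Monotone W) :
    ∃ i ≤ Module.finrank k V, W (i + 1) ≤ W i := by
  by_contra! hcon
  have hrank (i : ℕ) (hi : i ≤ Module.finrank k V + 1) : i ≤ Module.finrank k (W i) := by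
    induction i with
    | zero => exact Nat.zero_le _
    | succ i ih =>
      have hlt : W i < W (i + 1) := (hW i.le_succ).lt_of_not_ge (hcon i (by omega))
      exact (Nat.succ_le_succ (ih (by omega))).trans (Submodule.finrank_lt_finrank_of_lt hlt)
  exact Nat.lt_irrefl _ ((hrank _ le_rfl).trans (Submodule.finrank_le _))

lemma le_of_le_sup_span_singleton [IsLocalRing A] [IsNoetherianRing A] {K L : Ideal A} {l : A}
    (hl : l ∈ maximalIdeal A) (hKL : K ≤ L) (hreg : ∀ b, l * b ∈ L → b ∈ L)
    (hle : L ≤ K ⊔ Ideal.span {l}) : L ≤ K := by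
  refine Submodule.le_of_le_smul_of_le_jacobson_bot (I := maximalIdeal A)
    (IsNoetherian.noetherian _) (maximalIdeal_le_jacobson _) fun a ha => ?_
  obtain ⟨b, c, hc, rfl⟩ := Ideal.mem_span_singleton_sup.mp (sup_comm K _ ▸ hle ha)
  rw [mul_comm, L.add_mem_iff_left (hKL hc)] at ha
  rw [add_comm, mul_comm]
  exact Submodule.add_mem_sup hc (Ideal.mul_mem_mul hl (hreg b ha))

/-- The images of the colon ideals `I : h ^ i` in `A ⧸ (I ⊔ (l))` must stabilize within `N` steps,
and by Nakayama's lemma so do the colon ideals themselves. -/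
lemma pow_mem_of_finrank_quotient_sup_le [IsLocalRing A] [IsNoetherianRing A] {k : Type*} [Field k]
    [Algebra k A] {l : A} (hl : l ∈ maximalIdeal A) (hreg : IsSMulRegular (A ⧸ I) l)
    [Module.Finite k (A ⧸ (I ⊔ Ideal.span {l}))] {N : ℕ}
    (hN : Module.finrank k (A ⧸ (I ⊔ Ideal.span {l})) ≤ N) {h : A} (hh : h ∈ I.radical) :
    h ^ N ∈ I := by
  let K (i : ℕ) : Ideal A := I.colon {h ^ i}
  have hK {i : ℕ} {a : A} : a ∈ K i ↔ a * h ^ i ∈ I := Submodule.mem_colon_singleton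
  have hmono : Monotone K := monotone_nat_of_le_succ fun i a ha => by
    rw [hK] at ha ⊢
    rw [pow_succ, ← mul_assoc]
    exact Ideal.mul_mem_right _ _ ha
  have hIK (i : ℕ) : I ≤ K i := fun a ha => hK.mpr (Ideal.mul_mem_right _ _ ha)
  let π := (Ideal.Quotient.mkₐ k (I ⊔ Ideal.span {l})).toLinearMap
  obtain ⟨i, hi, hle⟩ := exists_le_finrank_succ_le_of_monotone
    (W := fun i => ((K i).restrictScalars k).map π) fun i j hij => Submodule.map_mono (hmono hij)
  have hstab : K (i + 1) ≤ K i := by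
    refine le_of_le_sup_span_singleton hl (hmono i.le_succ) (fun b hb => ?_) fun a ha => ?_
    · rw [hK, mul_assoc] at hb
      exact hK.mpr (mem_of_isSMulRegular_quotient_of_smul_mem hreg hb)
    · obtain ⟨b, hb, hba⟩ := hle ⟨a, ha, rfl⟩
      have hab : a - b ∈ I ⊔ Ideal.span {l} := Ideal.Quotient.eq.mp hba.symm
      rw [← add_sub_cancel b a]
      exact add_mem (Ideal.mem_sup_left hb) (sup_le_sup_right (hIK i) _ hab)
  have hdesc (j : ℕ) (hj : h ^ (i + j) ∈ I) : h ^ i ∈ I := by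
    induction j with
    | zero => exact hj
    | succ j ih =>
      rw [add_comm j, ← add_assoc, add_comm _ j, pow_add, ← hK] at hj
      exact ih (by rw [add_comm, pow_add]; exact hK.mp (hstab hj))
  obtain ⟨e, he⟩ := hh
  exact I.pow_mem_of_pow_mem (hdesc e (by rw [pow_add]; exact Ideal.mul_mem_left _ _ he))
    (hi.trans hN)

lemma mem_sup_span_mul {p l a : A} (hl : IsSMulRegular (A ⧸ (I ⊔ Ideal.span {p})) l)
    (hap : a ∈ I ⊔ Ideal.span {p}) (hal : a ∈ I ⊔ Ideal.span {l}) :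
    a ∈ I ⊔ Ideal.span {p * l} := by
  rw [sup_comm, Ideal.mem_span_singleton_sup] at hal
  obtain ⟨b, u, hu, rfl⟩ := hal
  rw [Ideal.add_mem_iff_left _ (Ideal.mem_sup_left hu), mul_comm] at hap
  have hb := mem_of_isSMulRegular_quotient_of_smul_mem hl hap
  rw [sup_comm, Ideal.mem_span_singleton_sup] at hb ⊢
  obtain ⟨c, v, hv, rfl⟩ := hb
  exact ⟨c, v * l + u, add_mem (Ideal.mul_mem_right _ _ hv) hu, by ring⟩

lemma mem_of_forall_exists_mem_pow_sup_span [IsLocalRing A] [IsNoetherianRing A] {a : A}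
    (ha : ∀ e, ∃ p ∈ maximalIdeal A ^ e, a ∈ I ⊔ Ideal.span {p}) : a ∈ I := by
  rw [← Ideal.Quotient.eq_zero_iff_mem]
  refine IsHausdorff.haus (I := maximalIdeal A) inferInstance _ fun e => SModEq.zero.mpr ?_
  obtain ⟨p, hp, hap⟩ := ha e
  rw [sup_comm, Ideal.mem_span_singleton_sup] at hap
  obtain ⟨b, u, hu, rfl⟩ := hap
  rw [map_add, Ideal.Quotient.eq_zero_iff_mem.mpr hu, add_zero, mul_comm]
  exact Submodule.smul_mem_smul (n := Ideal.Quotient.mk I b) hp trivial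

variable {k : Type v} [Field k] [Algebra k A] [IsLocalRing A] {n : ℕ} {t : Fin n → A}

lemma sum_smul_mem_maximalIdeal (ht : Ideal.span (Set.range t) = maximalIdeal A) (c : Fin n → k) :
    ∑ i, c i • t i ∈ maximalIdeal A := by
  rw [← ht]
  exact Ideal.sum_mem _ fun i _ => Submodule.smul_of_tower_mem _ _ (Ideal.subset_span ⟨i, rfl⟩)

/-- Products of generic linear forms lie in arbitrarily high powers of the maximal ideal, so Krull's
intersection theorem applies. -/
lemma mem_of_forall_linearCombination_mem_sup [Infinite k] [IsNoetherianRing A]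
    (ht : Ideal.span (Set.range t) = maximalIdeal A) (htreg : IsWeaklyRegular A (List.ofFn t))
    {as : List A} (has : IsWeaklyRegular A as) (hmem : ∀ a ∈ as, a ∈ maximalIdeal A)
    (hlt : as.length + 1 < n) {a : A}
    (ha : ∀ c : Fin n → k, IsSMulRegular (A ⧸ Ideal.ofList as) (∑ i, c i • t i) →
      a ∈ Ideal.ofList as ⊔ Ideal.span {∑ i, c i • t i}) : a ∈ Ideal.ofList as := by
  suffices hp : ∀ e, ∃ p ∈ maximalIdeal A ^ (e + 1), IsSMulRegular (A ⧸ Ideal.ofList as) p ∧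
      a ∈ Ideal.ofList as ⊔ Ideal.span {p} by
    refine mem_of_forall_exists_mem_pow_sup_span fun e => ?_
    obtain ⟨p, hpe, -, hap⟩ := hp e
    exact ⟨p, Ideal.pow_le_pow_right e.le_succ hpe, hap⟩
  intro e
  induction e with
  | zero =>
    obtain ⟨c, hc⟩ := exists_isSMulRegular_linearCombination_of_length_lt k ht htreg has (by omega)
    exact ⟨_, by simpa using sum_smul_mem_maximalIdeal ht c, hc, ha c hc⟩
  | succ e ih =>
    obtain ⟨p, hpe, hpreg, hap⟩ := ih
    have hasp := (isWeaklyRegular_append_singleton_iff as p).mpr ⟨has, hpreg⟩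
    obtain ⟨c, hc⟩ := exists_isSMulRegular_linearCombination_of_length_lt k ht htreg hasp
      (by simpa using hlt)
    set l := ∑ i, c i • t i
    have hl : l ∈ maximalIdeal A := sum_smul_mem_maximalIdeal ht c
    have hlreg : IsSMulRegular (A ⧸ Ideal.ofList as) l := by
      have hperm := isWeaklyRegular_of_perm_of_subset_maximalIdeal
        ((isWeaklyRegular_append_singleton_iff _ l).mpr ⟨hasp, hc⟩)
        (rs' := as ++ [l] ++ [p]) (by simpa using (List.Perm.swap l p []).append_left as) (by
          simpa [or_imp, forall_and] using ⟨hmem, Ideal.pow_le_self e.succ_ne_zero hpe, hl⟩)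
      simp only [isWeaklyRegular_append_singleton_iff] at hperm
      exact hperm.1.2
    refine ⟨p * l, pow_succ (maximalIdeal A) (e + 1) ▸ Ideal.mul_mem_mul hpe hl,
      hpreg.mul hlreg, mem_sup_span_mul ?_ hap (ha c hlreg)⟩
    rwa [Ideal.ofList_append, Ideal.ofList_singleton] at hc

end Nilpotency

section RadicalPow

lemma mem_of_forall_sum_pow_smul_mem {k M : Type*} [Field k] [Infinite k] [AddCommGroup M]
    [Module k M] {W : Submodule k M} {d : ℕ} {v : ℕ → M}
    (hv : ∀ c : k, ∑ i ∈ Finset.range d, c ^ i • v i ∈ W) {i : ℕ} (hi : i < d) : v i ∈ W := by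
  rw [← Submodule.Quotient.mk_eq_zero, ← Module.forall_dual_apply_eq_zero_iff k]
  intro φ
  have hzero : ∑ i ∈ Finset.range d, Polynomial.monomial i (φ (W.mkQ (v i))) = 0 := by
    refine Polynomial.funext fun c => ?_
    have hc := congrArg φ ((Submodule.Quotient.mk_eq_zero W).mpr (hv c))
    rw [← Submodule.mkQ_apply] at hc
    simpa [Polynomial.eval_finsetSum, mul_comm] using hc
  simpa [Polynomial.coeff_monomial, hi] using congrArg (Polynomial.coeff · i) hzero

variable {A : Type*} [CommRing A] [Algebra ℚ A]

/-- Extract the linear coefficient in `c` of `(c • b + a) ^ (N + 1)`. -/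
lemma pow_mul_mem_of_forall_pow_succ_mem {I J : Ideal A} {N : ℕ} (h : ∀ a ∈ J, a ^ (N + 1) ∈ I)
    {a b : A} (ha : a ∈ J) (hb : b ∈ J) : a ^ N * b ∈ I := by
  have hlin := mem_of_forall_sum_pow_smul_mem (k := ℚ) (W := I.restrictScalars ℚ) (d := N + 2)
    (v := fun i => b ^ i * a ^ (N + 1 - i) * ((N + 1).choose i : A)) (fun c => by
      have hc := h (c • b + a) (add_mem (Submodule.smul_of_tower_mem J c hb) ha)
      rw [add_pow] at hc
      simpa [smul_pow] using hc) (i := 1) (by omega)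
  simp only [Submodule.restrictScalars_mem, pow_one, Nat.add_sub_cancel,
    Nat.choose_one_right] at hlin
  have hunit : IsUnit ((N + 1 : ℕ) : A) := by
    rw [← map_natCast (algebraMap ℚ A)]
    exact (Nat.cast_ne_zero.mpr N.succ_ne_zero).isUnit.map _
  rwa [I.mul_unit_mem_iff_mem hunit, mul_comm] at hlin

lemma pow_le_of_forall_pow_mem {I J : Ideal A} {N : ℕ} (h : ∀ a ∈ J, a ^ N ∈ I) : J ^ N ≤ I := by
  induction N generalizing I with
  | zero => simpa [Ideal.eq_top_iff_one] using h 0 J.zero_mem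
  | succ N ih =>
    rw [pow_succ, Ideal.mul_le]
    intro p hp b hb
    exact Submodule.mem_colon_singleton.mp <| ih (I := I.colon {b}) (fun a ha =>
      Submodule.mem_colon_singleton.mpr (pow_mul_mem_of_forall_pow_succ_mem h ha hb)) hp

end RadicalPow

section PolynomialSequence

variable {A : Type u} [CommRing A] {n : ℕ}

lemma ofList_le_maximalIdeal [IsLocalRing A] {as : List A} (has : IsRegular A as) :
    Ideal.ofList as ≤ maximalIdeal A :=
  le_maximalIdeal fun h => has.top_ne_smul (by simp [h])

lemma ofList_ofFn (t : Fin n → A) : Ideal.ofList (List.ofFn t) = Ideal.span (Set.range t) := by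
  simp [Ideal.ofList, List.mem_ofFn', Set.range]

lemma length_le_of_isRegular [IsLocalRing A] [IsNoetherianRing A] {t : Fin n → A}
    (ht : Ideal.span (Set.range t) = maximalIdeal A) (htreg : IsWeaklyRegular A (List.ofFn t))
    {as : List A} (has : IsRegular A as) : as.length ≤ n := by
  have hdim : ringKrullDim A = n := by
    have htreg' : IsRegular A (List.ofFn t) := .of_isWeaklyRegular_of_mem_maximalIdeal A
      (List.forall_mem_ofFn_iff.mpr fun i => ht ▸ Ideal.subset_span ⟨i, rfl⟩) htreg
    rw [← ringKrullDim_add_length_eq_ringKrullDim_of_isRegular _ htreg', ofList_ofFn, ht,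
      List.length_ofFn, ringKrullDim_eq_zero_of_isField
        ((Ideal.Quotient.maximal_ideal_iff_isField_quotient _).mp (maximalIdeal.isMaximal A)),
      zero_add]
  have : Nontrivial (A ⧸ Ideal.ofList as) := Ideal.Quotient.nontrivial_iff.mpr
    (ne_top_of_le_ne_top (maximalIdeal.isMaximal A).ne_top (ofList_le_maximalIdeal has))
  have hlen : (as.length : WithBot ℕ∞) ≤ n := by
    rw [← hdim, ← ringKrullDim_add_length_eq_ringKrullDim_of_isRegular _ has]
    exact le_add_of_nonneg_left ringKrullDim_nonneg_of_nontrivial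
  exact_mod_cast hlen

variable {k : Type v} [Field k] [Algebra k A] {w : Fin n → A} {x : Fin n → k}

lemma exists_aeval_eq_and_totalDegree_eq_one {I : Ideal A} (hI : I ≠ ⊤) {c : Fin n → k}
    (hc : IsSMulRegular (A ⧸ I) (∑ i, c i • (w i - algebraMap k A (x i)))) :
    ∃ l : MvPolynomial (Fin n) k,
      aeval w l = ∑ i, c i • (w i - algebraMap k A (x i)) ∧ l.totalDegree = 1 := by
  let l : MvPolynomial (Fin n) k := ∑ i, c i • (X i - C (x i))
  have hl : aeval w l = ∑ i, c i • (w i - algebraMap k A (x i)) := by simp [l]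
  have hle : l.totalDegree ≤ 1 := totalDegree_finsetSum_le fun i _ =>
    (totalDegree_smul_le _ _).trans ((totalDegree_sub_C_le _ _).trans (by simp))
  refine ⟨l, hl, hle.antisymm (Nat.one_le_iff_ne_zero.mpr fun h0 => hI ?_)⟩
  rw [totalDegree_eq_zero_iff_eq_C] at h0
  have hx : eval x l = 0 := by simp [l]
  have hl0 : l = 0 := by rw [h0, eval_C] at hx; rw [h0, hx, C_0]
  rw [← hl, hl0, map_zero] at hc
  rw [Ideal.eq_top_iff_one]
  exact mem_of_isSMulRegular_quotient_of_smul_mem hc (by simp)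

variable [IsLocalRing A]

lemma exists_isRegular_ofList_eq_sup_span {fs : List (MvPolynomial (Fin n) k)}
    (hdeg : ∀ f ∈ fs, 0 < f.totalDegree) (hfs : IsRegular A (fs.map (aeval w)))
    {c : Fin n → k} (hc : IsSMulRegular (A ⧸ Ideal.ofList (fs.map (aeval w)))
      (∑ i, c i • (w i - algebraMap k A (x i))))
    (hcm : ∑ i, c i • (w i - algebraMap k A (x i)) ∈ maximalIdeal A) :
    ∃ gs : List (MvPolynomial (Fin n) k), gs.length = fs.length + 1 ∧
      (∀ g ∈ gs, 0 < g.totalDegree) ∧ IsRegular A (gs.map (aeval w)) ∧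
      (gs.map totalDegree).prod = (fs.map totalDegree).prod ∧
      Ideal.ofList (gs.map (aeval w)) = Ideal.ofList (fs.map (aeval w)) ⊔
        Ideal.span {∑ i, c i • (w i - algebraMap k A (x i))} := by
  have hle := ofList_le_maximalIdeal hfs
  obtain ⟨l, hl, hl1⟩ := exists_aeval_eq_and_totalDegree_eq_one
    (ne_top_of_le_ne_top (maximalIdeal.isMaximal A).ne_top hle) hc
  refine ⟨fs ++ [l], by simp, ?_, ?_, by simp [hl1], by simp [Ideal.ofList_append, hl]⟩
  · simpa [or_imp, forall_and, hl1] using hdeg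
  · rw [List.map_append, List.map_singleton, hl]
    refine .of_isWeaklyRegular_of_mem_maximalIdeal A (fun a ha => ?_)
      ((isWeaklyRegular_append_singleton_iff _ _).mpr ⟨hfs.toIsWeaklyRegular, hc⟩)
    rcases List.mem_append.mp ha with ha | ha
    · exact hle (Ideal.subset_span ha)
    · rwa [List.mem_singleton.mp ha]

/-- Induction on `n - fs.length`: adjoin generic linear forms until the quotient has dimension at
most one. -/
lemma pow_prod_totalDegree_mem [IsNoetherianRing A] [Infinite k]
    (hres : Function.Surjective (algebraMap k (ResidueField A)))
    (hgen : Ideal.span (Set.range fun i => w i - algebraMap k A (x i)) = maximalIdeal A)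
    (htreg : IsWeaklyRegular A (List.ofFn fun i => w i - algebraMap k A (x i)))
    {fs : List (MvPolynomial (Fin n) k)} (hdeg : ∀ f ∈ fs, 0 < f.totalDegree)
    (hfs : IsRegular A (fs.map (aeval w))) {h : A}
    (hh : h ∈ (Ideal.ofList (fs.map (aeval w))).radical) :
    h ^ (fs.map totalDegree).prod ∈ Ideal.ofList (fs.map (aeval w)) := by
  obtain ⟨r, hr⟩ : ∃ r, fs.length + r = n :=
    Nat.exists_eq_add_of_le' (by simpa using length_le_of_isRegular hgen htreg hfs)
      |>.imp fun r hr => by omega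
  induction r generalizing fs with
  | zero =>
    obtain ⟨_, hfin⟩ := finite_and_finrank_quotient_ofList_le hres hgen (by omega) hdeg
      hfs.toIsWeaklyRegular
    exact pow_mem_of_finrank_quotient_le hfin hh
  | succ r ih =>
    have hmem := ofList_le_maximalIdeal hfs
    rcases Nat.eq_zero_or_pos r with rfl | hr0
    · obtain ⟨c, hc⟩ := exists_isSMulRegular_linearCombination_of_length_lt k hgen htreg
        hfs.toIsWeaklyRegular (by rw [List.length_map]; omega)
      have hcm := sum_smul_mem_maximalIdeal hgen c
      obtain ⟨gs, hlen, hgdeg, hgs, hprod, hofList⟩ :=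
        exists_isRegular_ofList_eq_sup_span hdeg hfs hc hcm
      obtain ⟨hfinite, hfinrank⟩ := finite_and_finrank_quotient_ofList_le hres hgen
        (by omega) hgdeg hgs.toIsWeaklyRegular
      rw [hofList] at hfinite hfinrank
      exact pow_mem_of_finrank_quotient_sup_le hcm hc (hprod ▸ hfinrank) hh
    · refine mem_of_forall_linearCombination_mem_sup (k := k) hgen htreg
        hfs.toIsWeaklyRegular (fun a ha => hmem (Ideal.subset_span ha))
        (by rw [List.length_map]; omega) fun c hc => ?_
      obtain ⟨gs, hlen, hgdeg, hgs, hprod, hofList⟩ :=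
        exists_isRegular_ofList_eq_sup_span hdeg hfs hc (sum_smul_mem_maximalIdeal hgen c)
      rw [← hofList, ← hprod]
      exact ih hgdeg hgs (hofList ▸ Ideal.radical_mono le_sup_left hh) (by omega)

theorem radical_pow_subset_of_regular_sequence_general [IsNoetherianRing A] [CharZero k]
    (hres : Function.Surjective (algebraMap k (ResidueField A)))
    (hgen : Ideal.span (Set.range fun i => w i - algebraMap k A (x i)) = maximalIdeal A)
    (htreg : IsWeaklyRegular A (List.ofFn fun i => w i - algebraMap k A (x i)))
    {m : ℕ} {F : Fin m → MvPolynomial (Fin n) k} (hdeg : ∀ j, 0 < (F j).totalDegree)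
    {g : Fin m → A} (hg : ∀ j, g j = aeval w (F j)) (hreg : IsRegular A (List.ofFn g)) :
    (Ideal.span (Set.range g)).radical ^ (∏ j, (F j).totalDegree) ≤ Ideal.span (Set.range g) := by
  let : Algebra ℚ A := Algebra.compHom A (algebraMap ℚ k)
  have hlist : List.ofFn g = (List.ofFn F).map (aeval w) := by
    rw [List.map_ofFn, List.ofFn_inj]
    exact funext hg
  have hprod : ∏ j, (F j).totalDegree = ((List.ofFn F).map totalDegree).prod := by
    rw [List.map_ofFn, List.prod_ofFn]
    rfl
  rw [hlist] at hreg
  rw [← ofList_ofFn, hlist, hprod]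
  exact pow_le_of_forall_pow_mem fun _ => pow_prod_totalDegree_mem hres hgen htreg
    (List.forall_mem_ofFn_iff.mpr hdeg) hreg

end PolynomialSequence

section AbsolutelySummable

variable {ι 𝕜 E : Type*} [NontriviallyNormedField 𝕜] [NormedAddCommGroup E] [NormedSpace 𝕜 E]

lemma hasSum_norm_coeff (b : ℓ¹(ι, 𝕜)) : HasSum (fun i => ‖b i‖) ‖b‖ := by
  simpa using lp.hasSum_norm (p := 1) (by simp) b

lemma summable_norm_smul {v : ι → E} {C : ℝ} (hv : ∀ i, ‖v i‖ ≤ C) (b : ℓ¹(ι, 𝕜)) :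
    Summable fun i => ‖b i • v i‖ := by
  refine ((hasSum_norm_coeff b).summable.mul_right C).of_nonneg_of_le
    (fun _ => norm_nonneg _) fun i => ?_
  rw [norm_smul]
  gcongr
  exact hv i

lemma norm_tsum_smul_le {v : ι → E} {C : ℝ} (hv : ∀ i, ‖v i‖ ≤ C) (b : ℓ¹(ι, 𝕜)) :
    ‖∑' i, b i • v i‖ ≤ C * ‖b‖ := by
  refine tsum_of_norm_bounded ((hasSum_norm_coeff b).mul_left C) fun i => ?_
  rw [norm_smul, mul_comm C]
  gcongr
  exact hv i

section Basis

variable [DecidableEq ι]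

lemma norm_lp_single_one (i : ι) : ‖(lp.single 1 i 1 : ℓ¹(ι, 𝕜))‖ = 1 := by
  simp [lp.norm_single]

lemma lp_clm_ext {S T : ℓ¹(ι, 𝕜) →L[𝕜] E}
    (h : ∀ i, S (lp.single 1 i 1) = T (lp.single 1 i 1)) : S = T := by
  ext b
  have hsum : HasSum (fun i => b i • (lp.single 1 i 1 : ℓ¹(ι, 𝕜))) b := by
    simpa [← lp.single_smul] using lp.hasSum_single (p := 1) (by simp) b
  have hS := hsum.mapL S
  simp only [map_smul, h] at hS
  exact hS.unique (by simpa only [map_smul] using hsum.mapL T)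

end Basis

variable [CompleteSpace E]

/-- The continuous linear map on `ℓ¹` taking the basis vector at `i` to `v i`, for a bounded
family `v`. -/
noncomputable def lpOneLift (v : ι → E) {C : ℝ} (hv : ∀ i, ‖v i‖ ≤ C) : ℓ¹(ι, 𝕜) →L[𝕜] E :=
  LinearMap.mkContinuous
    { toFun b := ∑' i, b i • v i
      map_add' b c := by
        simp only [lp.coeFn_add, Pi.add_apply, add_smul]
        exact (summable_norm_smul hv b).of_norm.tsum_add (summable_norm_smul hv c).of_norm
      map_smul' a b := by
        simp only [lp.coeFn_smul, Pi.smul_apply, smul_assoc, RingHom.id_apply]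
        exact (summable_norm_smul hv b).of_norm.tsum_const_smul a }
    C (norm_tsum_smul_le hv)

lemma lpOneLift_apply {v : ι → E} {C : ℝ} (hv : ∀ i, ‖v i‖ ≤ C) (b : ℓ¹(ι, 𝕜)) :
    lpOneLift v hv b = ∑' i, b i • v i := rfl

lemma norm_lpOneLift_le [Nonempty ι] {v : ι → E} {C : ℝ} (hv : ∀ i, ‖v i‖ ≤ C) :
    ‖lpOneLift (𝕜 := 𝕜) v hv‖ ≤ C :=
  LinearMap.mkContinuous_norm_le _ ((norm_nonneg _).trans (hv (Classical.arbitrary ι))) _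

@[simp]
lemma lpOneLift_single [DecidableEq ι] {v : ι → E} {C : ℝ} (hv : ∀ i, ‖v i‖ ≤ C) (i : ι) :
    lpOneLift v hv (lp.single 1 i (1 : 𝕜)) = v i := by
  rw [lpOneLift_apply, tsum_eq_single i fun j hj => by
    rw [lp.single_apply_ne _ _ _ hj, zero_smul], lp.single_apply_self, one_smul]

lemma lpOneLift_surjective_of_norm_sub_le [DecidableEq ι] [Nonempty ι] [CompleteSpace 𝕜]
    {v : ι → ℓ¹(ι, 𝕜)} {C D : ℝ} (hv : ∀ i, ‖v i‖ ≤ C) (hD : D < 1)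
    (hsub : ∀ i, ‖lp.single 1 i 1 - v i‖ ≤ D) : Function.Surjective (lpOneLift (𝕜 := 𝕜) v hv) := by
  have hlift : 1 - lpOneLift (𝕜 := 𝕜) _ hsub = lpOneLift v hv := lp_clm_ext fun i => by simp
  obtain ⟨U, hU⟩ :=
    isUnit_one_sub_of_norm_lt_one ((norm_lpOneLift_le (𝕜 := 𝕜) hsub).trans_lt hD)
  rw [← hlift, ← hU]
  exact fun b => ⟨(↑U⁻¹ : ℓ¹(ι, 𝕜) →L[𝕜] ℓ¹(ι, 𝕜)) b, congrArg (· b) U.mul_inv⟩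

end AbsolutelySummable

section PowerSeries

variable {σ : Type*}

/-- The value at `t` of the power series with coefficients `b`. A monomial is encoded as the
multiset of its factors, so that its value at `t` is `(s.map t).prod`. -/
noncomputable def seriesEval (b : ℓ¹(Multiset σ, ℂ)) (t : σ → ℂ) : ℂ :=
  ∑' s, b s * (s.map t).prod

lemma seriesEval_single [DecidableEq σ] (s : Multiset σ) (t : σ → ℂ) :
    seriesEval (lp.single 1 s 1) t = (s.map t).prod := by
  rw [seriesEval, tsum_eq_single s fun r hr => by
    rw [lp.single_apply_ne _ _ _ hr, zero_mul], lp.single_apply_self, one_mul]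

variable [Fintype σ]

lemma norm_prod_map_le_one {t : σ → ℂ} (ht : ‖t‖ ≤ 1) (s : Multiset σ) :
    ‖(s.map t).prod‖ ≤ 1 := by
  induction s using Multiset.induction_on with
  | empty => simp
  | cons i s ih =>
    rw [Multiset.map_cons, Multiset.prod_cons, norm_mul]
    exact mul_le_one₀ ((norm_le_pi_norm t i).trans ht) (norm_nonneg _) ih

/-- Evaluation of absolutely convergent power series at a point of the closed unit polydisc. -/
noncomputable def seriesEvalCLM (t : σ → ℂ) (ht : ‖t‖ ≤ 1) : ℓ¹(Multiset σ, ℂ) →L[ℂ] ℂ :=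
  lpOneLift (fun s => (s.map t).prod) (norm_prod_map_le_one ht)

lemma seriesEvalCLM_apply {t : σ → ℂ} (ht : ‖t‖ ≤ 1) (b : ℓ¹(Multiset σ, ℂ)) :
    seriesEvalCLM t ht b = seriesEval b t := rfl

@[simp]
lemma seriesEvalCLM_single [DecidableEq σ] {t : σ → ℂ} (ht : ‖t‖ ≤ 1) (s : Multiset σ) :
    seriesEvalCLM t ht (lp.single 1 s 1) = (s.map t).prod :=
  seriesEval_single s t

lemma hasSum_seriesEval {t : σ → ℂ} (ht : ‖t‖ ≤ 1) (b : ℓ¹(Multiset σ, ℂ)) :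
    HasSum (fun s => b s * (s.map t).prod) (seriesEval b t) :=
  (summable_norm_smul (norm_prod_map_le_one ht) b).of_norm.hasSum

omit [Fintype σ] in
lemma exists_univ_map_eq_sym {k : ℕ} (s : Sym σ k) :
    ∃ l : Fin k → σ, Finset.univ.val.map l = s := by
  obtain ⟨⟨l⟩, rfl⟩ := s
  exact ⟨l.get, (Fin.univ_val_map l.get).trans (by rw [List.ofFn_get]; rfl)⟩

lemma exists_multilinear_eq_prod_map {k : ℕ} (s : Sym σ k) :
    ∃ M : ContinuousMultilinearMap ℂ (fun _ : Fin k => σ → ℂ) ℂ,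
      ‖M‖ ≤ 1 ∧ ∀ y, M (fun _ => y) = ((s : Multiset σ).map y).prod := by
  obtain ⟨l, hl⟩ := exists_univ_map_eq_sym s
  refine ⟨(ContinuousMultilinearMap.mkPiAlgebra ℂ (Fin k) ℂ).compContinuousLinearMap
    fun j => ContinuousLinearMap.proj (l j), ?_, fun y => ?_⟩
  · refine ContinuousMultilinearMap.opNorm_le_bound zero_le_one fun m => ?_
    rw [ContinuousMultilinearMap.compContinuousLinearMap_apply,
      ContinuousMultilinearMap.mkPiAlgebra_apply, norm_prod, one_mul]
    exact Finset.prod_le_prod (fun _ _ => norm_nonneg _) fun j _ => norm_le_pi_norm (m j) (l j)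
  · rw [ContinuousMultilinearMap.compContinuousLinearMap_apply,
      ContinuousMultilinearMap.mkPiAlgebra_apply, ← hl, Multiset.map_map]
    rfl

lemma analyticAt_seriesEval (b : ℓ¹(Multiset σ, ℂ)) :
    AnalyticAt ℂ (seriesEval b) 0 := by
  classical
  choose M hM hMeval using fun (k : ℕ) (s : Sym σ k) => exists_multilinear_eq_prod_map s
  let p : FormalMultilinearSeries ℂ (σ → ℂ) ℂ := fun k => ∑ s : Sym σ k, b s • M k s
  have hp (k : ℕ) : ‖p k‖ ≤ ‖b‖ :=
    calc ‖p k‖ ≤ ∑ s : Sym σ k, ‖b s‖ := norm_sum_le_of_le _ fun s _ => by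
          rw [norm_smul]
          exact mul_le_of_le_one_right (norm_nonneg _) (hM k s)
      _ ≤ ‖b‖ := by
          rw [← tsum_fintype (L := .unconditional _), ← (hasSum_norm_coeff b).tsum_eq]
          exact (hasSum_norm_coeff b).summable.tsum_subtype_le (fun s => ‖b s‖)
            {s | s.card = k} fun s => norm_nonneg _
  refine ⟨p, 1, ?_, zero_lt_one, fun {y} hy => ?_⟩
  · exact_mod_cast p.le_radius_of_bound ‖b‖ (r := 1) (by simpa using hp)
  · have hy1 : ‖y‖ ≤ 1 := by
      rw [mem_eball_zero_iff, ← ofReal_norm] at hy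
      exact (ENNReal.ofReal_lt_one.mp hy).le
    rw [zero_add]
    have hpk (k : ℕ) : (p k fun _ => y) =
        ∑' s : ↥(Multiset.card ⁻¹' {k} : Set (Multiset σ)), b s * (s.1.map y).prod := by
      simp only [p, sum_apply, smul_apply, hMeval, smul_eq_mul]
      exact (tsum_fintype (L := .unconditional (Sym σ k)) _).symm
    simpa only [hpk] using (hasSum_seriesEval hy1 b).tsum_fiberwise Multiset.card

end PowerSeries

section Rescaling

variable {n : ℕ}

/-- The factor by which one rescaling step stretches the `i`-th coordinate: the `i`-th prime, so
that distinct monomials are stretched by distinct factors. -/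
noncomputable def primeScale (i : Fin n) : ℕ := Nat.nth Nat.Prime i

lemma prime_primeScale (i : Fin n) : (primeScale i).Prime := Nat.prime_nth_prime i

lemma primeScale_injective : Function.Injective (primeScale (n := n)) :=
  (Nat.nth_injective Nat.infinite_setOfPred_prime).comp Fin.val_injective

/-- The factor by which one rescaling step stretches a monomial. -/
noncomputable def primeWeight (s : Multiset (Fin n)) : ℕ := (s.map primeScale).prod

lemma two_pow_card_le_primeWeight (s : Multiset (Fin n)) : 2 ^ s.card ≤ primeWeight s := by
  rw [← Multiset.card_map primeScale]
  refine Multiset.pow_card_le_prod fun p hp => ?_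
  obtain ⟨i, -, rfl⟩ := Multiset.mem_map.mp hp
  exact (prime_primeScale i).two_le

lemma primeWeight_pos (s : Multiset (Fin n)) : 0 < primeWeight s :=
  (by positivity : 0 < 2 ^ s.card).trans_le (two_pow_card_le_primeWeight s)

lemma primeWeight_injective : Function.Injective (primeWeight (n := n)) := by
  intro s t hst
  refine Multiset.map_injective primeScale_injective ?_
  have hprime (s : Multiset (Fin n)) : ∀ p ∈ s.map primeScale, Prime p := fun p hp => by
    obtain ⟨i, -, rfl⟩ := Multiset.mem_map.mp hp
    exact (prime_primeScale i).prime
  rw [← UniqueFactorizationMonoid.normalizedFactors_prod_of_prime (hprime s),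
    ← UniqueFactorizationMonoid.normalizedFactors_prod_of_prime (hprime t)]
  exact congrArg _ hst

lemma primeWeight_pow_ne_zero (s : Multiset (Fin n)) (d : ℕ) : (primeWeight s : ℂ) ^ d ≠ 0 :=
  pow_ne_zero d (Nat.cast_ne_zero.mpr (primeWeight_pos s).ne')

/-- Coordinates centred at `x` after `d` rescaling steps. -/
noncomputable def rescaledCoord (x : Fin n → ℂ) (d : ℕ) (z : Fin n → ℂ) : Fin n → ℂ :=
  fun i => (primeScale i : ℂ) ^ d * (z i - x i)

lemma rescaledCoord_self (x : Fin n → ℂ) (d : ℕ) : rescaledCoord x d x = 0 := by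
  ext i
  simp [rescaledCoord]

lemma analyticAt_apply (i : Fin n) (z : Fin n → ℂ) : AnalyticAt ℂ (fun z => z i) z :=
  (ContinuousLinearMap.proj (R := ℂ) (φ := fun _ : Fin n => ℂ) i).analyticAt z

lemma analyticAt_rescaledCoord (x : Fin n → ℂ) (d : ℕ) : AnalyticAt ℂ (rescaledCoord x d) x :=
  analyticAt_pi_iff.mpr fun i =>
    analyticAt_const.mul ((analyticAt_apply i x).sub analyticAt_const)

lemma eventually_norm_rescaledCoord_le_one (x : Fin n → ℂ) (d : ℕ) :
    ∀ᶠ z in 𝓝 x, ‖rescaledCoord x d z‖ ≤ 1 := by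
  have hlim := (analyticAt_rescaledCoord x d).continuousAt.norm
  rw [ContinuousAt, rescaledCoord_self, norm_zero] at hlim
  exact hlim.eventually_le_const zero_lt_one

lemma analyticAt_seriesEval_rescaledCoord (x : Fin n → ℂ) (d : ℕ) (b : ℓ¹(Multiset (Fin n), ℂ)) :
    AnalyticAt ℂ (fun z => seriesEval b (rescaledCoord x d z)) x :=
  (analyticAt_seriesEval b).fun_comp_of_eq (analyticAt_rescaledCoord x d) (rescaledCoord_self x d)

lemma prod_map_rescaledCoord (x : Fin n → ℂ) (d : ℕ) (z : Fin n → ℂ) (s : Multiset (Fin n)) :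
    (s.map (rescaledCoord x d z)).prod =
      (primeWeight s : ℂ) ^ d * (s.map fun i => z i - x i).prod := by
  rw [primeWeight, Nat.cast_multiset_prod, Multiset.map_map, ← Multiset.prod_map_pow,
    ← Multiset.prod_map_mul]
  rfl

end Rescaling

section Expansion

variable {n : ℕ}

lemma multilinear_apply_const_eq_sum {𝕜 σ E : Type*} [NontriviallyNormedField 𝕜] [Fintype σ]
    [DecidableEq σ] [NormedAddCommGroup E] [NormedSpace 𝕜 E] {k : ℕ}
    (M : ContinuousMultilinearMap 𝕜 (fun _ : Fin k => σ → 𝕜) E) (y : σ → 𝕜) :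
    M (fun _ => y) =
      ∑ w : Fin k → σ, (∏ j, y (w j)) • M fun j => Pi.single (w j) 1 := by
  have hy : y = ∑ i, y i • (Pi.single i 1 : σ → 𝕜) := (pi_eq_sum_univ' y).trans (by simp)
  conv_lhs => rw [hy]
  rw [M.map_sum]
  simp only [M.map_smul_univ]

lemma exists_summable_norm_div_primeWeight_pow
    {p : FormalMultilinearSeries ℂ (Fin n → ℂ) ℂ} (hp : 0 < p.radius) :
    ∃ d : ℕ, Summable fun w : Σ k, Fin k → Fin n =>
      ‖p w.1 fun j => Pi.single (w.2 j) 1‖ / (primeWeight (Finset.univ.val.map w.2) : ℝ) ^ d := by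
  obtain ⟨ρ, hρ0, hρ⟩ := ENNReal.lt_iff_exists_nnreal_btwn.mp hp
  obtain ⟨C, -, hC⟩ := p.norm_mul_pow_le_of_lt_radius hρ
  replace hρ0 : (0 : ℝ) < ρ := by exact_mod_cast hρ0
  obtain ⟨d, hd⟩ := pow_unbounded_of_one_lt ((n : ℝ) / ρ) one_lt_two
  have hq : n / (ρ * 2 ^ d) < (1 : ℝ) := by
    rwa [div_lt_one (by positivity), ← div_lt_iff₀' hρ0]
  have hsingle (i : Fin n) : ‖(Pi.single i 1 : Fin n → ℂ)‖ ≤ 1 := by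
    rw [Pi.norm_single, norm_one]
  have hbound (w : Σ k, Fin k → Fin n) :
      ‖p w.1 fun j => Pi.single (w.2 j) 1‖ / (primeWeight (Finset.univ.val.map w.2) : ℝ) ^ d ≤
        C / (ρ * 2 ^ d) ^ w.1 := by
    have hnum : ‖p w.1 fun j => Pi.single (w.2 j) 1‖ ≤ C / ρ ^ w.1 :=
      ((p w.1).unit_le_opNorm ((pi_norm_le_iff_of_nonneg zero_le_one).mpr fun j =>
        hsingle (w.2 j))).trans
        ((le_div_iff₀ (by positivity)).mpr (hC w.1))
    have hden : (2 : ℝ) ^ w.1 ≤ primeWeight (Finset.univ.val.map w.2) := by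
      exact_mod_cast (two_pow_card_le_primeWeight (Finset.univ.val.map w.2)).trans_eq' (by simp)
    calc _ ≤ C / ρ ^ w.1 / (2 ^ w.1) ^ d := by gcongr; exact (norm_nonneg _).trans hnum
      _ = C / (ρ * 2 ^ d) ^ w.1 := by rw [div_div, mul_pow, ← pow_mul, ← pow_mul, mul_comm d]
  refine ⟨d, .of_nonneg_of_le (fun _ => by positivity) hbound ?_⟩
  have hC0 : 0 ≤ C := (by positivity : 0 ≤ ‖p 0‖ * (ρ : ℝ) ^ 0).trans (hC 0)
  refine (summable_sigma_of_nonneg fun _ => by positivity).mpr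
    ⟨fun k => (hasSum_fintype _).summable, ?_⟩
  refine ((summable_geometric_of_lt_one (by positivity) hq).mul_left C).congr fun k => ?_
  dsimp only
  rw [tsum_fintype, Finset.sum_const, Finset.card_univ, Fintype.card_fun, Fintype.card_fin,
    Fintype.card_fin, nsmul_eq_mul, Nat.cast_pow, div_pow]
  ring

theorem exists_eventuallyEq_seriesEval {x : Fin n → ℂ} {f : (Fin n → ℂ) → ℂ}
    (hf : AnalyticAt ℂ f x) : ∃ (d : ℕ) (b : ℓ¹(Multiset (Fin n), ℂ)),
      f =ᶠ[𝓝 x] fun z => seriesEval b (rescaledCoord x d z) := by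
  obtain ⟨p, r, hp⟩ := hf
  obtain ⟨d, hd⟩ := exists_summable_norm_div_primeWeight_pow hp.radius_pos
  let c (w : Σ k, Fin k → Fin n) : ℂ := p w.1 fun j => Pi.single (w.2 j) 1
  let wt (w : Σ k, Fin k → Fin n) : ℂ := (primeWeight (Finset.univ.val.map w.2) : ℂ) ^ d
  let e (w : Σ k, Fin k → Fin n) : ℓ¹(Multiset (Fin n), ℂ) :=
    lp.single 1 (Finset.univ.val.map w.2) 1
  have hsum : Summable fun w => (c w / wt w) • e w := .of_norm <| by
    simpa [norm_smul, e, norm_lp_single_one, wt] using hd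
  refine ⟨d, ∑' w, (c w / wt w) • e w, ?_⟩
  have hball : ∀ᶠ z in 𝓝 x, z ∈ Metric.eball x r := Metric.eball_mem_nhds x hp.r_pos
  filter_upwards [hball, eventually_norm_rescaledCoord_le_one x d] with z hz hT
  have hterm (k : ℕ) : ∑ w : Fin k → Fin n,
      seriesEvalCLM _ hT ((c ⟨k, w⟩ / wt ⟨k, w⟩) • e ⟨k, w⟩) = p k fun _ => z - x := by
    rw [multilinear_apply_const_eq_sum]
    refine Finset.sum_congr rfl fun w _ => ?_
    have hwt : wt ⟨k, w⟩ ≠ 0 := primeWeight_pow_ne_zero _ d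
    rw [map_smul, seriesEvalCLM_single, prod_map_rescaledCoord, smul_eq_mul, ← mul_assoc,
      div_mul_cancel₀ _ hwt, mul_comm, Multiset.map_map]
    rfl
  have hright := (hsum.hasSum.mapL (seriesEvalCLM _ hT)).sigma fun k => hasSum_fintype _
  simp only [hterm] at hright
  exact (hp.hasSum_sub hz).unique hright

end Expansion

section RescaleCLM

variable {n : ℕ}

/-- The change of coefficients under `e` further rescaling steps of the coordinates. -/
noncomputable def rescaleCLM (e : ℕ) : ℓ¹(Multiset (Fin n), ℂ) →L[ℂ] ℓ¹(Multiset (Fin n), ℂ) :=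
  lpOneLift (fun s => ((primeWeight s : ℂ) ^ e)⁻¹ • lp.single 1 s 1) (C := 1) fun s => by
    rw [norm_smul, norm_lp_single_one, mul_one, norm_inv, norm_pow, Complex.norm_natCast]
    exact inv_le_one_of_one_le₀ (one_le_pow₀ (by exact_mod_cast primeWeight_pos s))

lemma rescaleCLM_single (e : ℕ) (s : Multiset (Fin n)) :
    rescaleCLM e (lp.single 1 s 1) = ((primeWeight s : ℂ) ^ e)⁻¹ • lp.single 1 s 1 :=
  lpOneLift_single _ s

lemma rescaleCLM_coeff (e : ℕ) (b : ℓ¹(Multiset (Fin n), ℂ)) (s : Multiset (Fin n)) :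
    rescaleCLM e b s = ((primeWeight s : ℂ) ^ e)⁻¹ * b s := by
  have hcoeff : lp.evalCLM ℂ (fun _ => ℂ) 1 s ∘L rescaleCLM e =
      ((primeWeight s : ℂ) ^ e)⁻¹ • lp.evalCLM ℂ (fun _ => ℂ) 1 s := lp_clm_ext fun r => by
    rw [ContinuousLinearMap.comp_apply, rescaleCLM_single, map_smul, smul_apply]
    change ((primeWeight r : ℂ) ^ e)⁻¹ * (lp.single 1 r 1 : ℓ¹(Multiset (Fin n), ℂ)) s =
      ((primeWeight s : ℂ) ^ e)⁻¹ * (lp.single 1 r 1 : ℓ¹(Multiset (Fin n), ℂ)) s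
    obtain rfl | hrs := eq_or_ne r s
    · rfl
    · rw [lp.single_apply_ne _ _ _ hrs.symm, mul_zero, mul_zero]
  exact DFunLike.congr_fun hcoeff b

lemma seriesEval_rescaleCLM (x : Fin n → ℂ) (d e : ℕ) (z : Fin n → ℂ)
    (b : ℓ¹(Multiset (Fin n), ℂ)) :
    seriesEval (rescaleCLM e b) (rescaledCoord x (d + e) z) =
      seriesEval b (rescaledCoord x d z) := by
  refine tsum_congr fun s => ?_
  have hs := primeWeight_pow_ne_zero s e
  rw [rescaleCLM_coeff, prod_map_rescaledCoord, prod_map_rescaledCoord, pow_add]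
  field_simp

lemma norm_smul_rescaleCLM_sub_single_le {b : ℓ¹(Multiset (Fin n), ℂ)} {s : Multiset (Fin n)}
    (hs : b s = 1) (hlt : ∀ r, primeWeight r < primeWeight s → b r = 0) (e : ℕ) :
    ‖(primeWeight s : ℂ) ^ e • rescaleCLM e b - lp.single 1 s 1‖ ≤
      (primeWeight s / (primeWeight s + 1) : ℝ) ^ e * ‖b‖ := by
  refine hasSum_le (fun r => ?_) (hasSum_norm_coeff _) ((hasSum_norm_coeff b).mul_left _)
  rw [lp.coeFn_sub, Pi.sub_apply, lp.coeFn_smul, Pi.smul_apply, smul_eq_mul, rescaleCLM_coeff]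
  obtain rfl | hrs := eq_or_ne r s
  · rw [hs, mul_one, mul_inv_cancel₀ (primeWeight_pow_ne_zero r e), lp.single_apply_self, sub_self,
      norm_zero]
    positivity
  rw [lp.single_apply_ne _ _ _ hrs, sub_zero]
  obtain hr | hr := (primeWeight_injective.ne hrs).lt_or_gt
  · simp [hlt r hr]
  · have hr' : (primeWeight s + 1 : ℝ) ≤ primeWeight r := by exact_mod_cast hr
    rw [← mul_assoc, norm_mul, norm_mul, norm_inv, norm_pow, norm_pow, Complex.norm_natCast,
      Complex.norm_natCast, ← div_eq_mul_inv, ← div_pow]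
    gcongr

end RescaleCLM

namespace HoloGermAt

variable {n : ℕ} {x : Fin n → ℂ}

/-- The germ at `x` of a function analytic at `x`. -/
noncomputable def mk (f : (Fin n → ℂ) → ℂ) (hf : AnalyticAt ℂ f x) : HoloGermAt n x :=
  ⟨f, f, hf, rfl⟩

lemma mk_eq_mk {f g : (Fin n → ℂ) → ℂ} {hf : AnalyticAt ℂ f x} {hg : AnalyticAt ℂ g x} :
    mk f hf = mk g hg ↔ f =ᶠ[𝓝 x] g :=
  Subtype.ext_iff.trans Germ.coe_eq

lemma exists_eq_mk (a : HoloGermAt n x) : ∃ f hf, a = mk f hf := by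
  obtain ⟨-, f, hf, rfl⟩ := a
  exact ⟨f, hf, rfl⟩

noncomputable instance : Algebra ℂ (HoloGermAt n x) :=
  RingHom.toAlgebra
    { toFun c := mk (fun _ => c) analyticAt_const
      map_one' := rfl
      map_mul' _ _ := rfl
      map_zero' := rfl
      map_add' _ _ := rfl }

lemma algebraMap_eq_mk (c : ℂ) :
    algebraMap ℂ (HoloGermAt n x) c = mk (fun _ => c) analyticAt_const := rfl

variable (x)

/-- The germ at `x` of a power series in the coordinates centred at `x`, rescaled `d` times. -/
noncomputable def ofSeries (d : ℕ) : ℓ¹(Multiset (Fin n), ℂ) →ₗ[ℂ] HoloGermAt n x where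
  toFun b := mk (fun z => seriesEval b (rescaledCoord x d z))
    (analyticAt_seriesEval_rescaledCoord x d b)
  map_add' b c := Subtype.ext <| Germ.coe_eq.mpr <|
    (eventually_norm_rescaledCoord_le_one x d).mono fun _ hz => map_add (seriesEvalCLM _ hz) b c
  map_smul' c b := Subtype.ext <| Germ.coe_eq.mpr <|
    (eventually_norm_rescaledCoord_le_one x d).mono fun _ hz => map_smul (seriesEvalCLM _ hz) c b

lemma ofSeries_eq_mk (d : ℕ) (b : ℓ¹(Multiset (Fin n), ℂ)) :
    ofSeries x d b = mk (fun z => seriesEval b (rescaledCoord x d z))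
      (analyticAt_seriesEval_rescaledCoord x d b) := rfl

lemma ofSeries_rescaleCLM (d e : ℕ) (b : ℓ¹(Multiset (Fin n), ℂ)) :
    ofSeries x (d + e) (rescaleCLM e b) = ofSeries x d b := by
  rw [ofSeries_eq_mk, ofSeries_eq_mk, mk_eq_mk]
  exact .of_forall fun z => seriesEval_rescaleCLM x d e z b

variable {x}

lemma eventually_exists_ofSeries_eq (a : HoloGermAt n x) :
    ∀ᶠ d in atTop, ∃ b, ofSeries x d b = a := by
  obtain ⟨f, hf, rfl⟩ := exists_eq_mk a
  obtain ⟨d₀, b, hb⟩ := exists_eventuallyEq_seriesEval hf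
  filter_upwards [eventually_ge_atTop d₀] with d hd
  obtain ⟨e, rfl⟩ := Nat.exists_eq_add_of_le hd
  refine ⟨rescaleCLM e b, ?_⟩
  rw [ofSeries_rescaleCLM, ofSeries_eq_mk, mk_eq_mk]
  exact hb.symm

/-- Rescaling makes the monomial of least weight dominate the rest of a power series. -/
lemma eventually_exists_ofSeries_mem_norm_sub_single_le {I : Ideal (HoloGermAt n x)} {d₀ : ℕ}
    {b : ℓ¹(Multiset (Fin n), ℂ)} (hb : ofSeries x d₀ b ∈ I) {s : Multiset (Fin n)}
    (hs : b s = 1) (hlt : ∀ r, primeWeight r < primeWeight s → b r = 0) :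
    ∀ᶠ d in atTop, ∃ u, ofSeries x d u ∈ I ∧ ‖u - lp.single 1 s 1‖ ≤ 1 / 2 := by
  have hq : (primeWeight s / (primeWeight s + 1) : ℝ) < 1 := by
    rw [div_lt_one (by positivity)]
    exact lt_add_one _
  have hlim : Tendsto (fun e : ℕ => (primeWeight s / (primeWeight s + 1) : ℝ) ^ e * ‖b‖) atTop
      (𝓝 0) := by
    simpa using (tendsto_pow_atTop_nhds_zero_of_lt_one (by positivity) hq).mul_const ‖b‖
  have hsmall := (tendsto_sub_atTop_nat d₀).eventually
    (hlim.eventually_le_const (by norm_num : (0 : ℝ) < 1 / 2))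
  filter_upwards [hsmall, eventually_ge_atTop d₀] with d hd hd₀
  obtain ⟨e, rfl⟩ := Nat.exists_eq_add_of_le hd₀
  rw [Nat.add_sub_cancel_left] at hd
  refine ⟨(primeWeight s : ℂ) ^ e • rescaleCLM e b, ?_,
    (norm_smul_rescaleCLM_sub_single_le hs hlt e).trans hd⟩
  rw [map_smul, ofSeries_rescaleCLM]
  exact Submodule.smul_of_tower_mem I _ hb

end HoloGermAt

section MapOn

variable {ι κ 𝕜 : Type*} [DecidableEq ι] [DecidableEq κ] [NontriviallyNormedField 𝕜]
  [CompleteSpace 𝕜] (p : ι → Prop) [DecidablePred p] (f : ι → κ)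

/-- The linear map on `ℓ¹` taking the basis vector at `i` to the one at `f i` if `p i` holds, and
to `0` otherwise. -/
noncomputable def lpOneMapOn : ℓ¹(ι, 𝕜) →L[𝕜] ℓ¹(κ, 𝕜) :=
  lpOneLift (fun i => if p i then lp.single 1 (f i) 1 else 0) (C := 1) fun i => by
    split_ifs
    · exact (norm_lp_single_one _).le
    · simp

@[simp]
lemma lpOneMapOn_single (i : ι) :
    lpOneMapOn p f (lp.single 1 i (1 : 𝕜)) = if p i then lp.single 1 (f i) 1 else 0 :=
  lpOneLift_single _ i

omit [DecidableEq ι] in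
lemma norm_lpOneMapOn_le [Nonempty ι] : ‖lpOneMapOn (𝕜 := 𝕜) p f‖ ≤ 1 := norm_lpOneLift_le _

omit [DecidableEq ι] in
lemma lpOneMapOn_coeff_eq_zero {j : κ} (hj : ∀ i, p i → f i ≠ j) (b : ℓ¹(ι, 𝕜)) :
    lpOneMapOn p f b j = 0 := by
  classical
  have hcoeff : lp.evalCLM 𝕜 (fun _ => 𝕜) 1 j ∘L lpOneMapOn p f = 0 := lp_clm_ext fun i => by
    rw [ContinuousLinearMap.comp_apply, lpOneMapOn_single]
    split_ifs with hi
    · exact lp.single_apply_ne 1 _ _ (hj i hi).symm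
    · rfl
  exact DFunLike.congr_fun hcoeff b

end MapOn

section Division

variable {σ : Type*} [DecidableEq σ]

/-- Multiplication of a power series by the monomial `γ`. -/
noncomputable def shiftCLM (γ : Multiset σ) : ℓ¹(Multiset σ, ℂ) →L[ℂ] ℓ¹(Multiset σ, ℂ) :=
  lpOneMapOn (fun _ => True) (· + γ)

lemma shiftCLM_single (γ s : Multiset σ) :
    shiftCLM γ (lp.single 1 s 1) = lp.single 1 (s + γ) 1 := by
  simp [shiftCLM]

lemma norm_single_sub_shiftCLM_le {τ s : Multiset σ} (hτ : τ ≤ s) (u : ℓ¹(Multiset σ, ℂ)) :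
    ‖lp.single 1 s 1 - shiftCLM (s - τ) u‖ ≤ ‖u - lp.single 1 τ 1‖ := by
  have hs : lp.single 1 s (1 : ℂ) = shiftCLM (s - τ) (lp.single 1 τ 1) := by
    rw [shiftCLM_single, add_tsub_cancel_of_le hτ]
  rw [hs, ← map_sub, norm_sub_rev u]
  exact (shiftCLM (s - τ)).le_of_opNorm_le (norm_lpOneMapOn_le _ _) _ |>.trans_eq (one_mul _)

variable [Fintype σ]

lemma seriesEvalCLM_shiftCLM {t : σ → ℂ} (ht : ‖t‖ ≤ 1) (γ : Multiset σ)
    (b : ℓ¹(Multiset σ, ℂ)) :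
    seriesEvalCLM t ht (shiftCLM γ b) = (γ.map t).prod * seriesEval b t := by
  have heval : seriesEvalCLM t ht ∘L shiftCLM γ = (γ.map t).prod • seriesEvalCLM t ht :=
    lp_clm_ext fun s => by
      rw [ContinuousLinearMap.comp_apply, shiftCLM_single, smul_apply, seriesEvalCLM_single,
        seriesEvalCLM_single, Multiset.map_add, Multiset.prod_add, smul_eq_mul, mul_comm]
  exact DFunLike.congr_fun heval b

theorem exists_seriesEval_eq_sum_mul_add (T : Finset (Multiset σ))
    (u : Multiset σ → ℓ¹(Multiset σ, ℂ)) {D : ℝ} (hD₀ : 0 ≤ D) (hD : D < 1)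
    (hu : ∀ τ ∈ T, ‖u τ - lp.single 1 τ 1‖ ≤ D) (b : ℓ¹(Multiset σ, ℂ)) :
    ∃ (q : Multiset σ → ℓ¹(Multiset σ, ℂ)) (r : ℓ¹(Multiset σ, ℂ)),
      (∀ τ ∈ T, ∀ s, τ ≤ s → r s = 0) ∧ ∀ t, ‖t‖ ≤ 1 →
        seriesEval b t = ∑ τ ∈ T, seriesEval (q τ) t * seriesEval (u τ) t + seriesEval r t := by
  classical
  choose! divisor hdivisor using fun s (hs : ∃ τ ∈ T, τ ≤ s) => hs
  -- The substitution of `u τ` for a factor `τ ∈ T` of every monomial that has one is invertible.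
  let v (s : Multiset σ) : ℓ¹(Multiset σ, ℂ) :=
    if ∃ τ ∈ T, τ ≤ s then shiftCLM (s - divisor s) (u (divisor s)) else lp.single 1 s 1
  have hsub (s : Multiset σ) : ‖lp.single 1 s 1 - v s‖ ≤ D := by
    by_cases hs : ∃ τ ∈ T, τ ≤ s
    · simp only [v, if_pos hs]
      exact (norm_single_sub_shiftCLM_le (hdivisor s hs).2 _).trans (hu _ (hdivisor s hs).1)
    · simpa only [v, if_neg hs, sub_self, norm_zero]
  have hv (s : Multiset σ) : ‖v s‖ ≤ 1 + D :=
    (norm_le_norm_add_norm_sub _ _).trans (add_le_add (norm_lp_single_one s).le (hsub s))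
  obtain ⟨b, rfl⟩ := lpOneLift_surjective_of_norm_sub_le hv hD hsub b
  refine ⟨fun τ => lpOneMapOn (fun s => (∃ τ ∈ T, τ ≤ s) ∧ divisor s = τ) (· - τ) b,
    lpOneMapOn (fun s => ¬∃ τ ∈ T, τ ≤ s) id b, fun τ hτ s hs => ?_, fun t ht => ?_⟩
  · refine lpOneMapOn_coeff_eq_zero _ _ (fun r hr hrs => hr ⟨τ, hτ, ?_⟩) b
    rwa [show r = s from hrs]
  have heval : seriesEvalCLM t ht ∘L lpOneLift v hv =
      ∑ τ ∈ T, seriesEval (u τ) t • (seriesEvalCLM t ht ∘L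
        lpOneMapOn (fun s => (∃ τ ∈ T, τ ≤ s) ∧ divisor s = τ) (· - τ)) +
      seriesEvalCLM t ht ∘L lpOneMapOn (fun s => ¬∃ τ ∈ T, τ ≤ s) id := lp_clm_ext fun s => by
    simp only [add_apply, sum_apply, smul_apply, ContinuousLinearMap.comp_apply, lpOneLift_single,
      lpOneMapOn_single, smul_eq_mul]
    by_cases hs : ∃ τ ∈ T, τ ≤ s
    · rw [Finset.sum_eq_single_of_mem _ (hdivisor s hs).1 fun τ _ hτ => by simp [hτ.symm]]
      simp [v, hs, seriesEvalCLM_shiftCLM, mul_comm]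
    · simp [v, hs]
  have hb := DFunLike.congr_fun heval b
  simp only [add_apply, sum_apply, smul_apply, ContinuousLinearMap.comp_apply, seriesEvalCLM_apply,
    smul_eq_mul] at hb
  simpa only [mul_comm] using hb

end Division

section Noetherian

lemma exists_finset_subset_forall_exists_le {α : Type*} [PartialOrder α] [WellQuasiOrderedLE α]
    (S : Set α) : ∃ T : Finset α, ↑T ⊆ S ∧ ∀ s ∈ S, ∃ τ ∈ T, τ ≤ s := by
  have hfin : {τ | Minimal (· ∈ S) τ}.Finite :=
    WellQuasiOrderedLE.finite_of_isAntichain (setOfPred_minimal_antichain _)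
  refine ⟨hfin.toFinset, fun τ hτ => ?_, fun s hs => ?_⟩
  · exact ((hfin.mem_toFinset).mp hτ).prop
  · obtain ⟨τ, hle, hτ⟩ := exists_minimal_le_of_wellFoundedLT (· ∈ S) s hs
    exact ⟨τ, hfin.mem_toFinset.mpr hτ, hle⟩

lemma wellQuasiOrderedLE_multiset (σ : Type*) [Finite σ] : WellQuasiOrderedLE (Multiset σ) := by
  classical
  exact Finsupp.orderIsoMultiset.wellQuasiOrderedLE_iff.mp inferInstance

namespace HoloGermAt

variable {n : ℕ} {x : Fin n → ℂ}

lemma ofSeries_eq_sum_mul_add {ι : Type*} {T : Finset ι} {q u : ι → ℓ¹(Multiset (Fin n), ℂ)}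
    {b r : ℓ¹(Multiset (Fin n), ℂ)} (h : ∀ t, ‖t‖ ≤ 1 →
      seriesEval b t = ∑ τ ∈ T, seriesEval (q τ) t * seriesEval (u τ) t + seriesEval r t) (d : ℕ) :
    ofSeries x d b = ∑ τ ∈ T, ofSeries x d (q τ) * ofSeries x d (u τ) + ofSeries x d r := by
  have hcoe (c : ℓ¹(Multiset (Fin n), ℂ)) : (HoloGermAt n x).subtype (ofSeries x d c) =
      Germ.coeRingHom (𝓝 x) fun z => seriesEval c (rescaledCoord x d z) := rfl
  apply (HoloGermAt n x).subtype_injective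
  simp only [map_add, map_sum, map_mul, hcoe]
  simp only [← map_mul, ← map_sum, ← map_add]
  refine Germ.coe_eq.mpr ((eventually_norm_rescaledCoord_le_one x d).mono fun z hz => ?_)
  simpa using h _ hz

/-- The leading monomials of the power series with germ in `I`, with respect to the order of
monomials by weight. -/
def leadingMonomials (I : Ideal (HoloGermAt n x)) : Set (Multiset (Fin n)) :=
  {s | ∃ d b, ofSeries x d b ∈ I ∧ b s = 1 ∧ ∀ r, primeWeight r < primeWeight s → b r = 0}

lemma exists_mem_leadingMonomials_ne_zero {I : Ideal (HoloGermAt n x)} {d : ℕ}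
    {b : ℓ¹(Multiset (Fin n), ℂ)} (hb : ofSeries x d b ∈ I) (hne : b ≠ 0) :
    ∃ s ∈ leadingMonomials I, b s ≠ 0 := by
  obtain ⟨s₀, hs₀⟩ : {s | b s ≠ 0}.Nonempty := by
    by_contra! hempty
    exact hne (lp.ext (funext fun s => not_not.mp (Set.eq_empty_iff_forall_notMem.mp hempty s)))
  let s := Function.argminOn primeWeight {s | b s ≠ 0} ⟨s₀, hs₀⟩
  have hs : b s ≠ 0 := Function.argminOn_mem primeWeight {s | b s ≠ 0} ⟨s₀, hs₀⟩
  refine ⟨s, ⟨d, (b s)⁻¹ • b, ?_, inv_mul_cancel₀ hs, fun r hr => ?_⟩, hs⟩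
  · rw [map_smul]
    exact Submodule.smul_of_tower_mem I _ hb
  · have hbr : b r = 0 := not_not.mp fun h =>
      Function.not_lt_argminOn primeWeight {s | b s ≠ 0} h hr
    rw [lp.coeFn_smul, Pi.smul_apply, hbr, smul_zero]

lemma le_of_forall_mem_leadingMonomials {I J : Ideal (HoloGermAt n x)} (hJI : J ≤ I)
    {T : Finset (Multiset (Fin n))} (hTJ : ↑T ⊆ leadingMonomials J)
    (hTI : ∀ s ∈ leadingMonomials I, ∃ τ ∈ T, τ ≤ s) : I ≤ J := by
  intro a ha
  have hT : ∀ᶠ d in atTop, ∀ τ ∈ T, ∃ u, ofSeries x d u ∈ J ∧ ‖u - lp.single 1 τ 1‖ ≤ 1 / 2 := by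
    refine T.eventually_all.mpr fun τ hτ => ?_
    obtain ⟨d₀, b, hb, hlead, hlt⟩ := hTJ hτ
    exact eventually_exists_ofSeries_mem_norm_sub_single_le hb hlead hlt
  obtain ⟨d, hu, b, rfl⟩ := (hT.and (eventually_exists_ofSeries_eq a)).exists
  choose! u huJ hu using hu
  obtain ⟨q, r, hr, hdiv⟩ :=
    exists_seriesEval_eq_sum_mul_add T u (by norm_num) (by norm_num) hu b
  have hb := ofSeries_eq_sum_mul_add (x := x) hdiv d
  have hsum : ∑ τ ∈ T, ofSeries x d (q τ) * ofSeries x d (u τ) ∈ J :=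
    J.sum_mem fun τ hτ => J.mul_mem_left _ (huJ τ hτ)
  have hrI : ofSeries x d r ∈ I := by
    rw [eq_sub_of_add_eq' hb.symm]
    exact I.sub_mem ha (hJI hsum)
  have hr₀ : r = 0 := by
    by_contra hne
    obtain ⟨s, hs, hrs⟩ := exists_mem_leadingMonomials_ne_zero hrI hne
    obtain ⟨τ, hτ, hle⟩ := hTI s hs
    exact hrs (hr τ hτ s hle)
  rwa [hb, hr₀, map_zero, add_zero]

instance : IsNoetherianRing (HoloGermAt n x) := by
  classical
  refine (isNoetherianRing_iff_ideal_fg _).mpr fun I => ?_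
  have := wellQuasiOrderedLE_multiset (Fin n)
  obtain ⟨T, hTI, hT⟩ := exists_finset_subset_forall_exists_le (leadingMonomials I)
  choose! d b hbI hlead using fun τ (hτ : τ ∈ T) => hTI hτ
  let G : Finset (HoloGermAt n x) := T.image fun τ => ofSeries x (d τ) (b τ)
  have hGI : Ideal.span ↑G ≤ I := by
    simpa [G, Ideal.span_le, Set.subset_def] using hbI
  refine ⟨G, le_antisymm hGI (le_of_forall_mem_leadingMonomials hGI (fun τ hτ => ?_) hT)⟩
  exact ⟨d τ, b τ, Ideal.subset_span (Finset.mem_image_of_mem _ hτ), hlead τ hτ⟩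

end HoloGermAt

end Noetherian

namespace HoloGermAt

variable {n : ℕ} {x : Fin n → ℂ}

section Value

/-- The value of a germ at its base point. -/
noncomputable def value : HoloGermAt n x →+* ℂ := Germ.valueRingHom.comp (HoloGermAt n x).subtype

lemma value_mk {f : (Fin n → ℂ) → ℂ} (hf : AnalyticAt ℂ f x) : value (mk f hf) = f x := rfl

lemma value_algebraMap (c : ℂ) : value (algebraMap ℂ (HoloGermAt n x) c) = c := rfl

instance : IsLocalHom (value (x := x)) where
  map_nonunit a ha := by
    obtain ⟨f, hf, rfl⟩ := exists_eq_mk a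
    have hfx : f x ≠ 0 := ha.ne_zero
    refine IsUnit.of_mul_eq_one (mk _ (hf.inv hfx)) (Subtype.ext (Germ.coe_eq.mpr ?_))
    exact (hf.continuousAt.eventually_ne hfx).mono fun z hz => mul_inv_cancel₀ hz

instance : IsLocalRing (HoloGermAt n x) := value.domain_isLocalRing

lemma ker_value : RingHom.ker (value (x := x)) = maximalIdeal (HoloGermAt n x) :=
  ker_eq_maximalIdeal _ fun c => ⟨algebraMap ℂ _ c, value_algebraMap c⟩

lemma algebraMap_residueField_surjective :
    Function.Surjective (algebraMap ℂ (ResidueField (HoloGermAt n x))) := by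
  intro r
  obtain ⟨a, rfl⟩ := residue_surjective r
  refine ⟨value a, ?_⟩
  rw [IsScalarTower.algebraMap_apply ℂ (HoloGermAt n x), ResidueField.algebraMap_eq,
    ← sub_eq_zero, ← map_sub, residue_eq_zero_iff, ← ker_value, RingHom.mem_ker, map_sub,
    value_algebraMap, sub_self]

end Value

section Restrict

lemma analyticAt_piecewise (K : Finset (Fin n)) (z : Fin n → ℂ) :
    AnalyticAt ℂ (fun z => K.piecewise x z) z :=
  analyticAt_pi_iff.mpr fun i => by
    by_cases hi : i ∈ K
    · simpa only [Finset.piecewise_eq_of_mem _ _ _ hi] using analyticAt_const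
    · simpa only [Finset.piecewise_eq_of_notMem _ _ _ hi] using analyticAt_apply i z

lemma tendsto_piecewise (K : Finset (Fin n)) : Tendsto (fun z => K.piecewise x z) (𝓝 x) (𝓝 x) := by
  have hcont := (analyticAt_piecewise (x := x) K x).continuousAt
  rwa [ContinuousAt, K.piecewise_same] at hcont

/-- Restriction of germs to the coordinate plane through `x` on which the coordinates in `K` are
constant, followed by the extension that does not depend on these coordinates. -/
noncomputable def restrict (K : Finset (Fin n)) : HoloGermAt n x →+* HoloGermAt n x where
  toFun a := ⟨a.1.compTendsto _ (tendsto_piecewise K), by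
    obtain ⟨-, f, hf, rfl⟩ := a
    exact ⟨_, hf.fun_comp_of_eq (analyticAt_piecewise K x) (K.piecewise_same x), rfl⟩⟩
  map_one' := rfl
  map_mul' := by
    rintro ⟨-, f, hf, rfl⟩ ⟨-, g, hg, rfl⟩
    rfl
  map_zero' := rfl
  map_add' := by
    rintro ⟨-, f, hf, rfl⟩ ⟨-, g, hg, rfl⟩
    rfl

lemma restrict_mk (K : Finset (Fin n)) {f : (Fin n → ℂ) → ℂ} (hf : AnalyticAt ℂ f x) :
    restrict K (mk f hf) = mk (fun z => f (K.piecewise x z))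
      (hf.fun_comp_of_eq (analyticAt_piecewise K x) (K.piecewise_same x)) := rfl

lemma restrict_empty (a : HoloGermAt n x) : restrict ∅ a = a := by
  obtain ⟨f, hf, rfl⟩ := exists_eq_mk a
  rw [restrict_mk, mk_eq_mk]
  simp

lemma restrict_univ (a : HoloGermAt n x) : restrict Finset.univ a = algebraMap ℂ _ (value a) := by
  obtain ⟨f, hf, rfl⟩ := exists_eq_mk a
  rw [restrict_mk, algebraMap_eq_mk, mk_eq_mk]
  simp [value_mk]

lemma restrict_insert (i : Fin n) (K : Finset (Fin n)) (a : HoloGermAt n x) :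
    restrict (insert i K) a = restrict K (restrict {i} a) := by
  obtain ⟨f, hf, rfl⟩ := exists_eq_mk a
  simp only [restrict_mk, Finset.piecewise_insert, Finset.piecewise_singleton]

end Restrict

section Coord

variable (x) in
/-- The germ at `x` of the `i`-th coordinate. -/
noncomputable def coord (i : Fin n) : HoloGermAt n x :=
  mk (fun z => z i) (analyticAt_apply i x)

variable (x) in
/-- The germ at `x` of the `i`-th coordinate centred at `x`. -/
noncomputable def centredCoord (i : Fin n) : HoloGermAt n x :=
  coord x i - algebraMap ℂ _ (x i)

lemma centredCoord_eq_mk (i : Fin n) : centredCoord x i = mk (fun z => z i - x i)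
    ((analyticAt_apply i x).fun_sub analyticAt_const) := rfl

lemma coe_aeval_coord (p : MvPolynomial (Fin n) ℂ) :
    (aeval (coord x) p : Germ (𝓝 x) ℂ) = ((fun z => eval z p) : Germ (𝓝 x) ℂ) := by
  induction p using MvPolynomial.induction_on with
  | C c =>
    simp only [algHom_C, eval_C]
    rfl
  | add p q hp hq =>
    simp only [map_add, Subring.coe_add, hp, hq]
    rfl
  | mul_X p i hp =>
    simp only [map_mul, Subring.coe_mul, hp, aeval_X, eval_X]
    rfl

lemma restrict_centredCoord_of_mem {K : Finset (Fin n)} {i : Fin n} (hi : i ∈ K) :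
    restrict K (centredCoord x i) = 0 := by
  refine Subtype.ext (Germ.coe_eq.mpr (.of_forall fun z => ?_))
  simp [hi]

lemma restrict_centredCoord_of_notMem {K : Finset (Fin n)} {i : Fin n} (hi : i ∉ K) :
    restrict K (centredCoord x i) = centredCoord x i := by
  rw [centredCoord_eq_mk, restrict_mk, mk_eq_mk]
  simp [hi]

end Coord

end HoloGermAt

section RegularCoord

lemma exists_seriesEval_sub_update_eq {σ : Type*} [Fintype σ] [DecidableEq σ] (i : σ)
    (b : ℓ¹(Multiset σ, ℂ)) :
    ∃ q, ∀ t, ‖t‖ ≤ 1 →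
      seriesEval b t - seriesEval b (Function.update t i 0) = t i * seriesEval q t := by
  refine ⟨lpOneMapOn (i ∈ ·) (·.erase i) b, fun t ht => ?_⟩
  have ht₀ : ‖Function.update t i 0‖ ≤ 1 := by
    refine (pi_norm_le_iff_of_nonneg zero_le_one).mpr fun j => ?_
    obtain rfl | hj := eq_or_ne j i
    · simp
    · simpa [hj] using (norm_le_pi_norm t j).trans ht
  have heval : seriesEvalCLM t ht - seriesEvalCLM _ ht₀ =
      t i • (seriesEvalCLM t ht ∘L lpOneMapOn (i ∈ ·) (·.erase i)) := lp_clm_ext fun s => by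
    simp only [sub_apply, smul_apply, ContinuousLinearMap.comp_apply, seriesEvalCLM_single,
      lpOneMapOn_single, smul_eq_mul]
    split_ifs with hi
    · have hprod : (s.map (Function.update t i 0)).prod = 0 :=
        Multiset.prod_eq_zero (Multiset.mem_map.mpr ⟨i, hi, Function.update_self ..⟩)
      rw [hprod, sub_zero, seriesEvalCLM_single, Multiset.prod_map_erase hi]
    · have hmap : s.map (Function.update t i 0) = s.map t :=
        Multiset.map_congr rfl fun j hj => Function.update_of_ne (ne_of_mem_of_not_mem hj hi) ..
      rw [hmap, sub_self, map_zero, mul_zero]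
  exact DFunLike.congr_fun heval b

namespace HoloGermAt

variable {n : ℕ} {x : Fin n → ℂ}

lemma sub_restrict_singleton_mem (i : Fin n) (a : HoloGermAt n x) :
    a - restrict {i} a ∈ Ideal.span {centredCoord x i} := by
  obtain ⟨d, b, rfl⟩ := (eventually_exists_ofSeries_eq a).exists
  obtain ⟨q, hq⟩ := exists_seriesEval_sub_update_eq i b
  refine Ideal.mem_span_singleton'.mpr ⟨((primeScale i : ℂ) ^ d) • ofSeries x d q, ?_⟩
  refine Subtype.ext (Germ.coe_eq.mpr ?_)
  filter_upwards [eventually_norm_rescaledCoord_le_one x d] with z hz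
  have hupdate : rescaledCoord x d (({i} : Finset (Fin n)).piecewise x z) =
      Function.update (rescaledCoord x d z) i 0 := by
    ext j
    obtain rfl | hj := eq_or_ne j i <;> simp [rescaledCoord, *]
  have hdiff := hq _ hz
  rw [← hupdate] at hdiff
  refine Eq.trans ?_ hdiff.symm
  change (primeScale i : ℂ) ^ d * seriesEval q _ * (z i - x i) = _
  rw [rescaledCoord]
  ring

lemma sub_restrict_mem (K : Finset (Fin n)) (a : HoloGermAt n x) :
    a - restrict K a ∈ Ideal.span (centredCoord x '' K) := by
  induction K using Finset.induction_on generalizing a with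
  | empty => simp [restrict_empty]
  | insert i K _ ih =>
    rw [restrict_insert, Finset.coe_insert, Set.image_insert_eq, Ideal.span_insert,
      ← sub_add_sub_cancel a (restrict {i} a)]
    exact Submodule.add_mem_sup (sub_restrict_singleton_mem i a) (ih _)

lemma span_range_centredCoord :
    Ideal.span (Set.range (centredCoord x)) = maximalIdeal (HoloGermAt n x) := by
  refine le_antisymm (Ideal.span_le.mpr ?_) fun a ha => ?_
  · rintro _ ⟨i, rfl⟩
    rw [← ker_value]
    simp [centredCoord_eq_mk, value_mk]
  · rw [← ker_value, RingHom.mem_ker] at ha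
    simpa [restrict_univ, ha] using sub_restrict_mem Finset.univ a

lemma eq_zero_of_centredCoord_mul_eq_zero {i : Fin n} {a : HoloGermAt n x}
    (h : centredCoord x i * a = 0) : a = 0 := by
  obtain ⟨f, hf, rfl⟩ := exists_eq_mk a
  have hmul : ∀ᶠ z in 𝓝 x, (z i - x i) * f z = 0 := Germ.coe_eq.mp (congrArg Subtype.val h)
  have hdense : Dense {z : Fin n → ℂ | z i ≠ x i} :=
    (dense_compl_singleton (x i)).preimage (isOpenMap_eval i)
  refine Subtype.ext (Germ.coe_eq.mpr ?_)
  filter_upwards [hmul.eventually_nhds, hf.eventually_continuousAt] with y hy hcont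
  by_contra hne
  obtain ⟨z, hzi, hz, hfz⟩ := ((mem_closure_iff_frequently.mp (hdense y)).and_eventually
    (hy.and (hcont.eventually_ne hne))).exists
  exact mul_ne_zero (sub_ne_zero.mpr hzi) hfz hz

/-- Restriction to the plane where the coordinates in `K` are constant kills the ideal and fixes
`centredCoord x i`. -/
lemma mem_span_of_centredCoord_mul_mem {K : Finset (Fin n)} {i : Fin n} (hi : i ∉ K)
    {a : HoloGermAt n x} (h : centredCoord x i * a ∈ Ideal.span (centredCoord x '' K)) :
    a ∈ Ideal.span (centredCoord x '' K) := by
  have hle : Ideal.span (centredCoord x '' K) ≤ RingHom.ker (restrict (x := x) K) := by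
    refine Ideal.span_le.mpr ?_
    rintro _ ⟨j, hj, rfl⟩
    exact restrict_centredCoord_of_mem hj
  have hmul := hle h
  rw [RingHom.mem_ker, map_mul, restrict_centredCoord_of_notMem hi] at hmul
  simpa [eq_zero_of_centredCoord_mul_eq_zero hmul] using sub_restrict_mem K a

lemma isWeaklyRegular_map_centredCoord {l : List (Fin n)} (hl : l.Nodup) :
    IsWeaklyRegular (HoloGermAt n x) (l.map (centredCoord x)) := by
  induction l using List.reverseRecOn with
  | nil => exact .nil _ _
  | append_singleton l i ih =>
    obtain ⟨hl, hi⟩ : l.Nodup ∧ i ∉ l := by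
      simpa [List.nodup_append'] using hl
    have hspan : Ideal.ofList (l.map (centredCoord x)) =
        Ideal.span (centredCoord x '' l.toFinset) := by
      rw [Ideal.ofList]
      congr 1
      ext
      simp
    rw [List.map_append, List.map_singleton, isWeaklyRegular_append_singleton_iff,
      isSMulRegular_quotient_iff_mem_of_smul_mem, hspan]
    exact ⟨ih hl, fun a => mem_span_of_centredCoord_mul_mem (by simpa)⟩

lemma isWeaklyRegular_ofFn_centredCoord :
    IsWeaklyRegular (HoloGermAt n x) (List.ofFn (centredCoord x)) := by
  rw [List.ofFn_eq_map]
  exact isWeaklyRegular_map_centredCoord (List.nodup_finRange n)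

end HoloGermAt

end RegularCoord

/-- Shiffman's lemma: if the germs of the polynomials `F_1,…,F_m` at `x ∈ ℂ^n` form a
regular sequence in the local ring `O_x` of germs of holomorphic functions, then with
`N = ∏_j deg F_j` one has `(√((F)_x))^N ⊆ (F)_x`. -/
theorem radical_pow_subset_of_regular_sequence (n m : ℕ) (x : Fin n → ℂ)
    (F : Fin m → MvPolynomial (Fin n) ℂ) (hdeg : ∀ j, 0 < (F j).totalDegree)
    (g : Fin m → HoloGermAt n x)
    (hg : ∀ j, (g j : Filter.Germ (nhds x) ℂ) =
      ((fun z => eval z (F j)) : Filter.Germ (nhds x) ℂ))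
    (hreg : RingTheory.Sequence.IsRegular (HoloGermAt n x) (List.ofFn g)) :
    (Ideal.span (Set.range g)).radical ^ (∏ j, (F j).totalDegree) ≤
      Ideal.span (Set.range g) := by
  exact radical_pow_subset_of_regular_sequence_general
    HoloGermAt.algebraMap_residueField_surjective HoloGermAt.span_range_centredCoord
    HoloGermAt.isWeaklyRegular_ofFn_centredCoord hdeg
    (fun j => Subtype.ext ((hg j).trans (HoloGermAt.coe_aeval_coord (F j)).symm)) hreg
end

section
/- Let F_1,…,F_m ∈ ℂ[z_1,…,z_n] with deg F_j ≤ d_j and let f_j be the d_j-homogenizations. If the common zero set of f_1,…,f_m in ℙ^n has codimension m and no irreducible component contained in the hyperplane {z_0 = 0}, and Φ lies in the ideal (F_1,…,F_m), then there exist polynomials Q_j with Φ = Σ_j F_j Q_j and deg(F_j Q_j) ≤ deg Φ for each j. -/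
open MvPolynomial

/-- The `d`-homogenization of `F ∈ ℂ[z_1,…,z_n]`. -/
noncomputable def homogenize (n d : ℕ) (F : MvPolynomial (Fin n) ℂ) :
    MvPolynomial (Fin (n + 1)) ℂ :=
  ∑ s ∈ F.support,
    monomial (Finsupp.cons (d - s.sum fun _ e => e) s) (MvPolynomial.coeff s F)

/-!
A polynomial ring in `N` variables over a field has depth `N` at every maximal ideal, so `m`
equations cutting out codimension `m` form a regular sequence locally and the ideal they generate
is unmixed: its associated primes are its minimal primes. Hence `z₀`, which avoids the minimal
primes of `(f_1, …, f_m)`, is a nonzerodivisor modulo this ideal. Homogenizing `Φ ∈ (F_1, …, F_m)`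
gives a form `φ` of degree `deg Φ` with `z₀ ^ k * φ ∈ (f_1, …, f_m)` for some `k`, so that already
`φ ∈ (f_1, …, f_m)`. Taking homogeneous coefficients in `φ = ∑ f_j q_j` and setting `z₀ = 1` yields
the degree bound.
-/

universe u v

open IsLocalRing RingTheory.Sequence
open scoped Pointwise

theorem ringKrullDim_quotient_add_one_le_of_lt {R : Type*} [CommRing R] {p q : Ideal R}
    [p.IsPrime] (hpq : p < q) :
    ringKrullDim (R ⧸ q) + 1 ≤ ringKrullDim (R ⧸ p) := by
  obtain ⟨x, hxq, hxp⟩ := SetLike.exists_of_lt hpq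
  refine ringKrullDim_succ_le_of_surjective (Ideal.Quotient.factor hpq.le)
    (Ideal.Quotient.factor_surjective hpq.le) (r := Ideal.Quotient.mk p x) ?_ ?_
  · rwa [mem_nonZeroDivisors_iff_ne_zero, Ne, Ideal.Quotient.eq_zero_iff_mem]
  · rwa [Ideal.Quotient.factor_mk, Ideal.Quotient.eq_zero_iff_mem]

theorem annihilator_le_of_mem_associatedPrimes {R M : Type*} [CommRing R] [AddCommGroup M]
    [Module R M] {Q : Ideal R} (hQ : Q ∈ associatedPrimes R M) : Module.annihilator R M ≤ Q :=
  Submodule.annihilator_top (R := R) (M := M) ▸ hQ.annihilator_le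

section Depth

variable {R : Type u} [CommRing R] [IsLocalRing R]

/-- `depth M ≥ k` for a module over a local ring: an `M`-regular sequence of length `k` exists
in the maximal ideal. Mathlib has no numerical depth. -/
def DepthGE (R : Type*) [CommRing R] [IsLocalRing R] (M : Type*) [AddCommGroup M] [Module R M]
    (k : ℕ) : Prop :=
  ∃ rs : List R, rs.length = k ∧ (∀ r ∈ rs, r ∈ maximalIdeal R) ∧ IsRegular M rs

theorem DepthGE.of_linearEquiv {M N : Type*} [AddCommGroup M] [Module R M] [AddCommGroup N]
    [Module R N] {k : ℕ} (h : DepthGE R M k) (e : M ≃ₗ[R] N) : DepthGE R N k :=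
  let ⟨rs, hlen, hmem, hreg⟩ := h
  ⟨rs, hlen, hmem, (e.isRegular_congr rs).1 hreg⟩

variable [IsNoetherianRing R]

section Exchange

variable {M : Type v} [AddCommGroup M] [Module R M] [Module.Finite R M]

open CategoryTheory Abelian in
theorem depthGE_iff_subsingleton_ext [Small.{v} R] [Nontrivial M] {k : ℕ} :
    DepthGE R M k ↔ ∀ i < k, Subsingleton
      (Ext (ModuleCat.of R (Shrink.{v} (R ⧸ maximalIdeal R))) (ModuleCat.of R M) i) :=
  have smul_top_ne_top : maximalIdeal R • (⊤ : Submodule R M) ≠ ⊤ :=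
    (Submodule.top_ne_ideal_smul_of_le_jacobson_annihilator (maximalIdeal_le_jacobson _)).symm
  ((ModuleCat.exists_isRegular_tfae (maximalIdeal R) k (ModuleCat.of R M)
    smul_top_ne_top.lt_top).out 1 3).symm

open CategoryTheory Abelian Limits in
-- By Rees' theorem the depth is read off `Ext (R ⧸ 𝔪) M`, so it drops by at most one along the
-- long exact sequence of `x`, whichever regular `x` is chosen.
theorem DepthGE.quotSMulTop [Small.{v} R] {k : ℕ} (h : DepthGE R M (k + 1)) {x : R}
    (hxm : x ∈ maximalIdeal R) (hx : IsSMulRegular M x) : DepthGE R (QuotSMulTop x M) k := by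
  have : Nontrivial M := h.choose_spec.2.2.nontrivial
  have : Nontrivial (QuotSMulTop x M) := nontrivial_quotSMulTop_of_mem_maximalIdeal M hxm
  rw [depthGE_iff_subsingleton_ext] at h ⊢
  intro i hi
  have ext_i := AddCommGrpCat.isZero_of_iff_subsingleton.mpr (h i (by lia))
  have ext_succ := AddCommGrpCat.isZero_of_iff_subsingleton.mpr (h (i + 1) (by lia))
  have hx' : IsSMulRegular (ModuleCat.of R M) x := hx
  exact AddCommGrpCat.subsingleton_of_isZero <| ShortComplex.Exact.isZero_of_both_zeros
    (Ext.covariant_sequence_exact₃' _ hx'.smulShortComplex_shortExact i (i + 1) rfl)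
    (ext_i.eq_zero_of_src _) (ext_succ.eq_zero_of_tgt _)

end Exchange

section AssociatedPrimes

variable {M : Type*} [AddCommGroup M] [Module R M] [Module.Finite R M]

theorem exists_mem_torsionBySet_notMem_smul_top {x : R} (hxm : x ∈ maximalIdeal R)
    (hx : IsSMulRegular M x) {s : Set R} (hs : Submodule.torsionBySet R M s ≠ ⊥) :
    ∃ w ∈ Submodule.torsionBySet R M s, w ∉ x • (⊤ : Submodule R M) := by
  by_contra! hle
  refine hs (Submodule.eq_bot_of_le_smul_of_le_jacobson_bot (maximalIdeal R) _
    (IsNoetherian.noetherian _) (fun w hw ↦ ?_) (maximalIdeal_le_jacobson _))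
  obtain ⟨w', -, rfl⟩ := (Submodule.mem_smul_pointwise_iff_exists ..).1 (hle w hw)
  refine Submodule.smul_mem_smul hxm ((Submodule.mem_torsionBySet_iff s w').2 fun q ↦ hx ?_)
  simpa only [smul_zero, smul_comm x (q : R)] using (Submodule.mem_torsionBySet_iff s _).1 hw q

theorem exists_lt_mem_associatedPrimes_quotSMulTop {x : R} (hxm : x ∈ maximalIdeal R)
    (hx : IsSMulRegular M x) {Q : Ideal R} (hQ : Q ∈ associatedPrimes R M) :
    ∃ Q' ∈ associatedPrimes R (QuotSMulTop x M), Q < Q' := by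
  obtain ⟨hQp, v, hv⟩ := (isAssociatedPrime_iff).1 hQ
  have mem_Q {q : R} : q ∈ Q ↔ q • v = 0 := by
    rw [hv, Submodule.mem_colon_singleton, Submodule.mem_bot]
  have hv0 : v ≠ 0 := fun h ↦ hQp.one_notMem (mem_Q.2 (by rw [h, smul_zero]))
  have hvQ : v ∈ Submodule.torsionBySet R M (Q : Set R) :=
    (Submodule.mem_torsionBySet_iff _ v).2 fun q ↦ mem_Q.1 q.2
  obtain ⟨w, hwQ, hwx⟩ := exists_mem_torsionBySet_notMem_smul_top hxm hx
    (Submodule.ne_bot_iff _ |>.2 ⟨v, hvQ, hv0⟩)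
  obtain ⟨Q', hQ', hle⟩ := exists_le_isAssociatedPrime_of_isNoetherianRing R
    (Submodule.Quotient.mk w : QuotSMulTop x M) ((Submodule.Quotient.mk_eq_zero _).not.2 hwx)
  have hQQ' : Q ≤ Q' := fun q hq ↦ hle <| by
    rw [Submodule.mem_colon_singleton, Submodule.mem_bot, ← Submodule.Quotient.mk_smul,
      (Submodule.mem_torsionBySet_iff _ w).1 hwQ ⟨q, hq⟩, Submodule.Quotient.mk_zero]
  have hxQ' : x ∈ Q' :=
    annihilator_le_of_mem_associatedPrimes hQ' (QuotSMulTop.mem_annihilator M x)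
  have hxQ : x ∉ Q := fun h ↦ hv0 (hx (by simpa only [smul_zero] using mem_Q.1 h))
  exact ⟨Q', hQ', hQQ'.lt_of_not_ge fun h ↦ hxQ (h hxQ')⟩

theorem DepthGE.le_ringKrullDim_quotient {k : ℕ} (h : DepthGE R M k) {Q : Ideal R}
    (hQ : Q ∈ associatedPrimes R M) : (k : WithBot ℕ∞) ≤ ringKrullDim (R ⧸ Q) := by
  obtain ⟨rs, rfl, hmem, hreg⟩ := h
  induction rs generalizing M Q with
  | nil =>
    have : Nontrivial (R ⧸ Q) := Ideal.Quotient.nontrivial_iff.2 hQ.isPrime.ne_top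
    exact ringKrullDim_nonneg_of_nontrivial
  | cons x rs ih =>
    rw [List.forall_mem_cons] at hmem
    rw [isRegular_cons_iff] at hreg
    obtain ⟨Q', hQ', hlt⟩ := exists_lt_mem_associatedPrimes_quotSMulTop hmem.1 hreg.1 hQ
    have := hQ.isPrime
    calc ((rs.length + 1 : ℕ) : WithBot ℕ∞) = rs.length + 1 := by push_cast; rfl
      _ ≤ ringKrullDim (R ⧸ Q') + 1 := by gcongr; exact ih hQ' hmem.2 hreg.2
      _ ≤ ringKrullDim (R ⧸ Q) := ringKrullDim_quotient_add_one_le_of_lt hlt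

theorem DepthGE.associatedPrimes_subset_minimalPrimes {k : ℕ} (h : DepthGE R M k)
    (hdim : Module.supportDim R M ≤ k) :
    associatedPrimes R M ⊆ (Module.annihilator R M).minimalPrimes := by
  intro Q hQ
  have := hQ.isPrime
  obtain ⟨p, hp, hpQ⟩ :=
    Ideal.exists_minimalPrimes_le (annihilator_le_of_mem_associatedPrimes hQ)
  have := hp.isPrime
  suffices ¬ p < Q from hpQ.eq_of_not_lt this ▸ hp
  intro hlt
  have : (k : WithBot ℕ∞) + 1 ≤ k :=
    calc (k : WithBot ℕ∞) + 1 ≤ ringKrullDim (R ⧸ Q) + 1 := by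
          gcongr; exact h.le_ringKrullDim_quotient hQ
      _ ≤ ringKrullDim (R ⧸ p) := ringKrullDim_quotient_add_one_le_of_lt hlt
      _ ≤ ringKrullDim (R ⧸ Module.annihilator R M) :=
          ringKrullDim_le_of_surjective _ (Ideal.Quotient.factor_surjective hp.le)
      _ = Module.supportDim R M :=
          (Module.supportDim_eq_ringKrullDim_quotient_annihilator R M).symm
      _ ≤ k := hdim
  exact absurd (Nat.cast_le.1 (mod_cast this : ((k + 1 : ℕ) : WithBot ℕ∞) ≤ k)) (by lia)

theorem supportDim_le_supportDim_quotient_ofList_add_length {rs : List R}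
    (hrs : ∀ r ∈ rs, r ∈ maximalIdeal R) :
    Module.supportDim R M ≤
      Module.supportDim R (M ⧸ Ideal.ofList rs • (⊤ : Submodule R M)) + rs.length := by
  induction rs generalizing M with
  | nil =>
    rw [Ideal.ofList_nil, Submodule.bot_smul]
    simpa using (Module.supportDim_eq_of_equiv (Submodule.quotEquivOfEqBot ⊥ rfl)).ge
  | cons x rs ih =>
    rw [List.forall_mem_cons] at hrs
    calc Module.supportDim R M ≤ Module.supportDim R (QuotSMulTop x M) + 1 :=
          Module.supportDim_le_supportDim_quotSMulTop_succ hrs.1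
      _ ≤ _ + rs.length + 1 := by gcongr; exact ih hrs.2
      _ = _ := by
        rw [← Module.supportDim_eq_of_equiv
          (Submodule.quotOfListConsSMulTopEquivQuotSMulTopInner M x rs), List.length_cons,
          Nat.cast_add_one, add_assoc]

theorem le_supportDim_quotient_ofList_of_mem_associatedPrimes {rs : List R} {Q : Ideal R}
    (hrs : ∀ r ∈ rs, r ∈ maximalIdeal R) (hQ : Q ∈ associatedPrimes R M) {x : R} (hx : x ∈ Q) :
    ringKrullDim (R ⧸ Q) ≤
      Module.supportDim R (M ⧸ Ideal.ofList (x :: rs) • (⊤ : Submodule R M)) + rs.length := by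
  have support_subset :
      Module.support R ((R ⧸ Q) ⧸ Ideal.ofList rs • (⊤ : Submodule R (R ⧸ Q))) ⊆
        Module.support R (M ⧸ Ideal.ofList (x :: rs) • (⊤ : Submodule R M)) := by
    rw [Module.support_quotient, Module.support_quotient, Module.support_eq_zeroLocus,
      Module.support_eq_zeroLocus, Ideal.annihilator_quotient, Ideal.ofList_cons,
      ← PrimeSpectrum.zeroLocus_sup, ← PrimeSpectrum.zeroLocus_sup, ← sup_assoc]
    have hle : Module.annihilator R M ⊔ Ideal.span {x} ≤ Q :=
      sup_le (annihilator_le_of_mem_associatedPrimes hQ)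
        ((Ideal.span_singleton_le_iff_mem Q).2 hx)
    exact PrimeSpectrum.zeroLocus_anti_mono_ideal (sup_le_sup_right hle _)
  calc ringKrullDim (R ⧸ Q) = Module.supportDim R (R ⧸ Q) :=
        (Module.supportDim_quotient_eq_ringKrullDim Q).symm
    _ ≤ _ + rs.length := supportDim_le_supportDim_quotient_ofList_add_length hrs
    _ ≤ _ := by
      gcongr
      exact Order.krullDim_le_of_strictMono (Set.inclusion support_subset) fun _ _ h ↦ h

end AssociatedPrimes

-- An equation `x` with the expected drop of dimension is regular: otherwise it lies in an
-- associated prime `Q` of `M`, whose dimension is at least the depth of `M`, so killing `x`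
-- does not cut down the component `V(Q)`.
theorem DepthGE.quotient_ofList [Small.{v} R] {M : Type v} [AddCommGroup M] [Module R M]
    [Module.Finite R M] {k : ℕ} {rs : List R} (h : DepthGE R M (k + rs.length))
    (hrs : ∀ r ∈ rs, r ∈ maximalIdeal R)
    (hdim : Module.supportDim R (M ⧸ Ideal.ofList rs • (⊤ : Submodule R M)) ≤ k) :
    DepthGE R (M ⧸ Ideal.ofList rs • (⊤ : Submodule R M)) k := by
  induction rs generalizing M with
  | nil => exact h.of_linearEquiv (Submodule.quotEquivOfEqBot _ (by simp)).symm
  | cons x rs ih =>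
    have hmem := List.forall_mem_cons.1 hrs
    have hx : IsSMulRegular M x := by
      by_contra hx
      obtain ⟨Q, hQ, hxQ⟩ := Set.mem_iUnion₂.1 <|
        (biUnion_associatedPrimes_eq_compl_regular R M).ge hx
      have : ((k + 1 : ℕ) : WithBot ℕ∞) + rs.length ≤ k + rs.length :=
        calc _ = ((k + (x :: rs).length : ℕ) : WithBot ℕ∞) := by
              rw [List.length_cons]; push_cast; ring
          _ ≤ ringKrullDim (R ⧸ Q) := h.le_ringKrullDim_quotient hQ
          _ ≤ _ + rs.length := le_supportDim_quotient_ofList_of_mem_associatedPrimes hmem.2 hQ hxQ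
          _ ≤ k + rs.length := by gcongr
      have := ENat.WithBot.add_le_add_natCast_right_iff.1 this
      exact absurd (Nat.cast_le.1 this) (by lia)
    have e := Submodule.quotOfListConsSMulTopEquivQuotSMulTopInner M x rs
    exact (ih (h.quotSMulTop hmem.1 hx) hmem.2
      ((Module.supportDim_eq_of_equiv e).ge.trans hdim)).of_linearEquiv e.symm

end Depth

section MaximalDepth

variable {R : Type*} [CommRing R] {k : ℕ}

/-- Every maximal ideal of `R` contains a weakly `R`-regular sequence of length `k`; equivalently,
all localizations of `R` at maximal ideals have depth at least `k` when `R` is Noetherian. -/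
def MaximalDepthGE (R : Type*) [CommRing R] (k : ℕ) : Prop :=
  ∀ 𝔪 : Ideal R, 𝔪.IsMaximal →
    ∃ rs : List R, rs.length = k ∧ (∀ r ∈ rs, r ∈ 𝔪) ∧ IsWeaklyRegular R rs

theorem maximalDepthGE_zero (R : Type*) [CommRing R] : MaximalDepthGE R 0 :=
  fun _ _ ↦ ⟨[], rfl, by simp, .nil _ _⟩

theorem MaximalDepthGE.of_ringEquiv {S : Type*} [CommRing S] (h : MaximalDepthGE R k)
    (e : R ≃+* S) : MaximalDepthGE S k := by
  intro 𝔪 h𝔪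
  obtain ⟨rs, hlen, hmem, hreg⟩ := h (𝔪.comap e) (Ideal.comap_isMaximal_of_equiv e)
  refine ⟨rs.map e, by rw [List.length_map, hlen], List.forall_mem_map.2 hmem, ?_⟩
  refine (AddEquiv.isWeaklyRegular_congr (e := e.toAddEquiv) ?_).1 hreg
  rw [List.forall₂_map_right_iff, List.forall₂_same]
  exact fun r _ s ↦ map_mul e r s

theorem MaximalDepthGE.depthGE_localization (h : MaximalDepthGE R k) (𝔪 : Ideal R)
    [h𝔪 : 𝔪.IsMaximal] : DepthGE (Localization.AtPrime 𝔪) (Localization.AtPrime 𝔪) k := by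
  obtain ⟨rs, hlen, hmem, hreg⟩ := h 𝔪 h𝔪
  have hmem' : ∀ r ∈ rs.map (algebraMap R (Localization.AtPrime 𝔪)), r ∈ maximalIdeal _ := by
    rw [List.forall_mem_map]
    exact fun r hr ↦ (IsLocalization.AtPrime.to_map_mem_maximal_iff _ 𝔪 r).2 (hmem r hr)
  exact ⟨_, by rw [List.length_map, hlen], hmem',
    hreg.isRegular_of_isLocalization_of_mem _ 𝔪 hmem⟩

theorem isSMulRegular_quotient_map_C_of_monic (I : Ideal R) {f : Polynomial R} (hf : f.Monic) :
    IsSMulRegular (Polynomial R ⧸ I.map Polynomial.C) f := by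
  rw [isSMulRegular_quotient_iff_mem_of_smul_mem]
  intro g hg
  have mem_iff (g : Polynomial R) :
      g ∈ I.map Polynomial.C ↔ g.map (Ideal.Quotient.mk I) = 0 := by
    rw [← Polynomial.coe_mapRingHom, ← RingHom.mem_ker, Polynomial.ker_mapRingHom, Ideal.mk_ker]
  rwa [mem_iff, smul_eq_mul, Polynomial.map_mul, (hf.map _).mul_right_eq_zero_iff,
    ← mem_iff] at hg

theorem exists_monic_mem_of_isMaximal [IsJacobsonRing R] (𝔪 : Ideal (Polynomial R))
    [𝔪.IsMaximal] : ∃ f ∈ 𝔪, f.Monic := by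
  obtain ⟨f, hf, hroot⟩ := Polynomial.quotient_mk_comp_C_isIntegral_of_isJacobsonRing 𝔪
    (Ideal.Quotient.mk 𝔪 Polynomial.X)
  rw [← Polynomial.hom_eval₂, Polynomial.eval₂_C_X] at hroot
  exact ⟨f, Ideal.Quotient.eq_zero_iff_mem.1 hroot, hf⟩

variable [IsJacobsonRing R]

theorem MaximalDepthGE.polynomial (h : MaximalDepthGE R k) :
    MaximalDepthGE (Polynomial R) (k + 1) := by
  intro 𝔪 h𝔪
  obtain ⟨f, hf𝔪, hf⟩ := exists_monic_mem_of_isMaximal 𝔪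
  obtain ⟨rs, hlen, hmem, hreg⟩ :=
    h (𝔪.comap Polynomial.C) (Polynomial.isMaximal_comap_C_of_isJacobsonRing 𝔪)
  refine ⟨rs.map Polynomial.C ++ [f], by simp [hlen], ?_, ?_⟩
  · simpa [or_imp, forall_and, hf𝔪] using hmem
  · rw [isWeaklyRegular_append_iff, isWeaklyRegular_singleton_iff]
    refine ⟨hreg.of_flat (S := Polynomial R), ?_⟩
    rw [← Ideal.map_ofList, smul_eq_mul, Ideal.mul_top]
    exact isSMulRegular_quotient_map_C_of_monic _ hf

theorem MaximalDepthGE.mvPolynomial (h : MaximalDepthGE R k) (n : ℕ) :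
    MaximalDepthGE (MvPolynomial (Fin n) R) (k + n) := by
  induction n with
  | zero => exact h.of_ringEquiv (isEmptyRingEquiv R (Fin 0)).symm
  | succ n ih => exact ih.polynomial.of_ringEquiv (finSuccEquiv R n).symm.toRingEquiv

end MaximalDepth

section Unmixed

variable {R : Type u} [CommRing R]

theorem ringKrullDim_quotient_map_le_of_isLocalization (T : Submonoid R) (S : Type*) [CommRing S]
    [Algebra R S] [IsLocalization T S] (I : Ideal R) :
    ringKrullDim (S ⧸ I.map (algebraMap R S)) ≤ ringKrullDim (R ⧸ I) := by
  rw [ringKrullDim_quotient, ringKrullDim_quotient]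
  refine Order.krullDim_le_of_strictMono
    (fun p ↦ ⟨PrimeSpectrum.comap (algebraMap R S) p.1, Ideal.map_le_iff_le_comap.1 p.2⟩) ?_
  exact fun p q hpq ↦ (IsLocalization.orderEmbedding T S).lt_iff_lt.2
    (show p.1.asIdeal < q.1.asIdeal from hpq)

theorem map_mem_associatedPrimes_quotient_map (T : Submonoid R) (S : Type*) [CommRing S]
    [Algebra R S] [IsLocalization T S] {I Q : Ideal R} (hQ : Q ∈ associatedPrimes R (R ⧸ I))
    (hdisj : Disjoint (T : Set R) Q) :
    Q.map (algebraMap R S) ∈ associatedPrimes S (S ⧸ I.map (algebraMap R S)) := by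
  rw [← Ideal.localized'_eq_map S T]
  have under_map := IsLocalization.under_map_of_isPrime_disjoint T S hQ.isPrime hdisj
  open Module.associatedPrimes in
  refine mem_associatedPrimes_of_comap_mem_associatedPrimes_of_isLocalizedModule T
    (I.toLocalizedQuotient' S T (Algebra.linearMap R S)) _ ?_
  rwa [← Ideal.under_def, under_map]

/-- Macaulay's unmixedness theorem. -/
theorem associatedPrimes_subset_minimalPrimes_of_maximalDepthGE [IsNoetherianRing R] {k : ℕ}
    {rs : List R} (hdepth : MaximalDepthGE R (k + rs.length))
    (hdim : ringKrullDim (R ⧸ Ideal.ofList rs) ≤ k) :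
    associatedPrimes R (R ⧸ Ideal.ofList rs) ⊆ (Ideal.ofList rs).minimalPrimes := by
  intro Q hQ
  obtain ⟨𝔪, h𝔪, hQ𝔪⟩ := Ideal.exists_le_maximal Q hQ.isPrime.ne_top
  let S := Localization.AtPrime 𝔪
  have hrsQ : Ideal.ofList rs ≤ Q :=
    Ideal.annihilator_quotient (I := Ideal.ofList rs) ▸ annihilator_le_of_mem_associatedPrimes hQ
  let ss := rs.map (algebraMap R S)
  have hss : ∀ s ∈ ss, s ∈ maximalIdeal S := by
    simp only [ss, List.forall_mem_map]
    exact fun r hr ↦ (IsLocalization.AtPrime.to_map_mem_maximal_iff S 𝔪 r).2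
      (hQ𝔪 (hrsQ (Ideal.subset_span hr)))
  have e : (S ⧸ Ideal.ofList ss) ≃ₗ[S] S ⧸ Ideal.ofList ss • (⊤ : Ideal S) :=
    Submodule.quotEquivOfEq _ _ (by simp)
  have hQS := map_mem_associatedPrimes_quotient_map 𝔪.primeCompl S hQ
    (Set.disjoint_compl_left_iff_subset.2 hQ𝔪)
  have hdimS : Module.supportDim S (S ⧸ Ideal.ofList ss • (⊤ : Ideal S)) ≤ k := by
    rw [← Module.supportDim_eq_of_equiv e, Module.supportDim_quotient_eq_ringKrullDim,
      ← Ideal.map_ofList]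
    exact (ringKrullDim_quotient_map_le_of_isLocalization 𝔪.primeCompl S _).trans hdim
  have hdepthS : DepthGE S S (k + ss.length) := by
    simpa only [ss, List.length_map] using hdepth.depthGE_localization 𝔪
  have hmin : Q.map (algebraMap R S) ∈ ((Ideal.ofList rs).map (algebraMap R S)).minimalPrimes := by
    have := (hdepthS.quotient_ofList hss hdimS).associatedPrimes_subset_minimalPrimes hdimS
    rw [← LinearEquiv.AssociatedPrimes.eq e, ← e.annihilator_eq, Ideal.annihilator_quotient,
      ← Ideal.map_ofList] at this
    exact this hQS
  rw [IsLocalization.minimalPrimes_map 𝔪.primeCompl S] at hmin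
  have := IsLocalization.under_map_of_isPrime_disjoint 𝔪.primeCompl S hQ.isPrime
    (Set.disjoint_compl_left_iff_subset.2 hQ𝔪)
  rwa [Set.mem_preimage, this] at hmin

theorem ringKrullDim_quotient_le_of_forall_minimalPrimes {I : Ideal R} {c : WithBot ℕ∞}
    (h : ∀ p ∈ I.minimalPrimes, ringKrullDim (R ⧸ p) ≤ c) : ringKrullDim (R ⧸ I) ≤ c := by
  rw [ringKrullDim_quotient, Order.krullDim]
  refine iSup_le fun chain ↦ ?_
  obtain ⟨p, hp, hle⟩ := Ideal.exists_minimalPrimes_le chain.head.2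
  have hp_le (i) : p ≤ (chain i).1.asIdeal := hle.trans (chain.monotone (Fin.zero_le i))
  let chain' : LTSeries (PrimeSpectrum.zeroLocus (p : Set R)) :=
    .mk chain.length (fun i ↦ ⟨(chain i).1, hp_le i⟩) fun _ _ hij ↦ chain.strictMono hij
  calc (chain.length : WithBot ℕ∞) = chain'.length := rfl
    _ ≤ Order.krullDim _ := Order.LTSeries.length_le_krullDim chain'
    _ = ringKrullDim (R ⧸ p) := (ringKrullDim_quotient p).symm
    _ ≤ c := h p hp

theorem isSMulRegular_quotient_ofList_of_notMem_minimalPrimes [IsNoetherianRing R] {k : ℕ}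
    {rs : List R} (hdepth : MaximalDepthGE R (k + rs.length))
    (hdim : ringKrullDim (R ⧸ Ideal.ofList rs) ≤ k) {x : R}
    (hx : ∀ p ∈ (Ideal.ofList rs).minimalPrimes, x ∉ p) :
    IsSMulRegular (R ⧸ Ideal.ofList rs) x := by
  by_contra hreg
  obtain ⟨Q, hQ, hxQ⟩ := Set.mem_iUnion₂.1 <|
    (biUnion_associatedPrimes_eq_compl_regular R (R ⧸ Ideal.ofList rs)).ge hreg
  exact hx Q (associatedPrimes_subset_minimalPrimes_of_maximalDepthGE hdepth hdim hQ) hxQ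

end Unmixed

section Field

variable {K : Type*} [Field K] {N m : ℕ} {f : Fin m → MvPolynomial (Fin N) K}

theorem isSMulRegular_quotient_span_range_of_le (hm : m ≤ N)
    (hcodim : ∀ p ∈ (Ideal.span (Set.range f)).minimalPrimes,
      ringKrullDim (MvPolynomial (Fin N) K ⧸ p) ≤ (N - m : ℕ))
    {x : MvPolynomial (Fin N) K} (hx : ∀ p ∈ (Ideal.span (Set.range f)).minimalPrimes, x ∉ p) :
    IsSMulRegular (MvPolynomial (Fin N) K ⧸ Ideal.span (Set.range f)) x := by
  have hspan : Ideal.span (Set.range f) = Ideal.ofList (List.ofFn f) := by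
    simp only [Ideal.ofList, List.mem_ofFn', Set.ofPred_mem_eq]
  have hdepth : MaximalDepthGE (MvPolynomial (Fin N) K) (N - m + (List.ofFn f).length) := by
    rw [List.length_ofFn, Nat.sub_add_cancel hm]
    simpa only [zero_add] using (maximalDepthGE_zero K).mvPolynomial N
  rw [hspan] at hcodim hx ⊢
  exact isSMulRegular_quotient_ofList_of_notMem_minimalPrimes hdepth
    (ringKrullDim_quotient_le_of_forall_minimalPrimes hcodim) hx

theorem span_range_le_ker_constantCoeff {σ ι : Type*} {f : ι → MvPolynomial σ K} {d : ι → ℕ}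
    (hf : ∀ j, (f j).IsHomogeneous (d j)) (hne : Ideal.span (Set.range f) ≠ ⊤) :
    Ideal.span (Set.range f) ≤ RingHom.ker (constantCoeff (R := K) (σ := σ)) := by
  rw [Ideal.span_le, Set.range_subset_iff]
  intro j
  by_contra hj
  have hcoeff : coeff 0 (f j) ≠ 0 := hj
  have hd : d j = 0 := by
    rw [← map_zero (Finsupp.degree (σ := σ) (R := ℕ))]
    exact (of_not_not fun h ↦ hcoeff ((hf j).coeff_eq_zero h)).symm
  have hconst : f j = C (coeff 0 (f j)) :=
    totalDegree_eq_zero_iff_eq_C.1 ((totalDegree_zero_iff_isHomogeneous σ).2 (hd ▸ hf j))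
  refine hne (Ideal.eq_top_of_isUnit_mem _ (Ideal.subset_span ⟨j, rfl⟩) ?_)
  exact hconst ▸ (IsUnit.mk0 _ hcoeff).map C

theorem exists_minimalPrimes_one_le_ringKrullDim_quotient {σ ι : Type*} {f : ι → MvPolynomial σ K}
    {d : ι → ℕ} (hf : ∀ j, (f j).IsHomogeneous (d j)) (hne : Ideal.span (Set.range f) ≠ ⊤) {i : σ}
    (hi : ∀ p ∈ (Ideal.span (Set.range f)).minimalPrimes, X i ∉ p) :
    ∃ p ∈ (Ideal.span (Set.range f)).minimalPrimes,
      1 ≤ ringKrullDim (MvPolynomial σ K ⧸ p) := by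
  let J : Ideal (MvPolynomial σ K) := RingHom.ker constantCoeff
  have hJ : J.IsPrime := RingHom.ker_isPrime _
  have : Nontrivial (MvPolynomial σ K ⧸ J) := Ideal.Quotient.nontrivial_iff.2 hJ.ne_top
  obtain ⟨p, hp, hle⟩ := Ideal.exists_minimalPrimes_le (span_range_le_ker_constantCoeff hf hne)
  have := hp.isPrime
  have hlt : p < J := SetLike.lt_iff_le_and_exists.2 ⟨hle, X i, constantCoeff_X K i, hi p hp⟩
  refine ⟨p, hp, ?_⟩
  calc (1 : WithBot ℕ∞) = 0 + 1 := (zero_add 1).symm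
    _ ≤ ringKrullDim (MvPolynomial σ K ⧸ J) + 1 := by
      gcongr; exact ringKrullDim_nonneg_of_nontrivial
    _ ≤ ringKrullDim (MvPolynomial σ K ⧸ p) := ringKrullDim_quotient_add_one_le_of_lt hlt

theorem isSMulRegular_quotient_span_range_X {d : Fin m → ℕ} (hf : ∀ j, (f j).IsHomogeneous (d j))
    (hcodim : ∀ p ∈ (Ideal.span (Set.range f)).minimalPrimes,
      ringKrullDim (MvPolynomial (Fin N) K ⧸ p) ≤ (N - m : ℕ))
    {i : Fin N} (hi : ∀ p ∈ (Ideal.span (Set.range f)).minimalPrimes, X i ∉ p) :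
    IsSMulRegular (MvPolynomial (Fin N) K ⧸ Ideal.span (Set.range f))
      (X i : MvPolynomial (Fin N) K) := by
  by_cases hne : Ideal.span (Set.range f) = ⊤
  · have := Ideal.Quotient.subsingleton_iff.2 hne
    exact Function.injective_of_subsingleton _
  · obtain ⟨p, hp, hdim⟩ := exists_minimalPrimes_one_le_ringKrullDim_quotient hf hne hi
    have : 1 ≤ N - m := by exact_mod_cast hdim.trans (hcodim p hp)
    exact isSMulRegular_quotient_span_range_of_le (by lia) hcodim hi

end Field

section Homogeneous

theorem exists_eq_sum_mul_and_mem_of_mem_span {A σ ι : Type*} [CommSemiring A] [SetLike σ A]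
    [AddSubmonoidClass σ A] (𝒜 : ℕ → σ) [GradedRing 𝒜] [Fintype ι] {f : ι → A} {d : ι → ℕ}
    (hf : ∀ j, f j ∈ 𝒜 (d j)) {a : A} {D : ℕ} (ha : a ∈ 𝒜 D)
    (hspan : a ∈ Ideal.span (Set.range f)) :
    ∃ q : ι → A, a = ∑ j, f j * q j ∧ ∀ j, f j * q j ∈ 𝒜 D := by
  obtain ⟨g, hg⟩ := Ideal.mem_span_range_iff_exists_fun.1 hspan
  let q j : A := if d j ≤ D then DirectSum.decompose 𝒜 (g j) (D - d j) else 0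
  have mul_q (j : ι) : f j * q j = GradedRing.proj 𝒜 D (g j * f j) := by
    rw [GradedRing.proj_apply, mul_comm (g j),
      DirectSum.coe_decompose_mul_of_left_mem 𝒜 D (hf j), mul_ite, mul_zero]
  refine ⟨q, ?_, fun j ↦ ?_⟩
  · rw [Finset.sum_congr rfl fun j _ ↦ mul_q j, ← map_sum, hg, GradedRing.proj_apply,
      DirectSum.decompose_of_mem_same 𝒜 ha]
  · rw [mul_q]
    exact SetLike.coe_mem _

variable {R : Type*} [CommSemiring R] {n : ℕ}

theorem degree_finsuppCons (e : ℕ) (s : Fin n →₀ ℕ) :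
    (Finsupp.cons e s).degree = e + s.degree := by
  simp only [Finsupp.degree_eq_sum, Fin.sum_univ_succ, Finsupp.cons_zero, Finsupp.cons_succ]

/-- `F ↦ z₀ ^ d * F (z / z₀)`, the homogenization in degree `d`. It is linear in `F`, but it is
homogeneous only for `deg F ≤ d`, since the subtraction in the exponent of `z₀` truncates. -/
noncomputable def homogenization (d : ℕ) :
    MvPolynomial (Fin n) R →ₗ[R] MvPolynomial (Fin (n + 1)) R :=
  (basisMonomials (Fin n) R).constr R fun s ↦ monomial (Finsupp.cons (d - s.degree) s) 1

theorem homogenization_monomial (d : ℕ) (s : Fin n →₀ ℕ) (c : R) :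
    homogenization d (monomial s c) = monomial (Finsupp.cons (d - s.degree) s) c := by
  have monomial_one : homogenization d (monomial s (1 : R)) =
      monomial (Finsupp.cons (d - s.degree) s) 1 :=
    (basisMonomials (Fin n) R).constr_basis R _ s
  rw [← mul_one c, ← smul_eq_mul, ← smul_monomial, map_smul, monomial_one, smul_monomial]

theorem homogenization_apply (d : ℕ) (F : MvPolynomial (Fin n) R) : homogenization d F =
    ∑ s ∈ F.support, monomial (Finsupp.cons (d - s.degree) s) (coeff s F) := by
  conv_lhs => rw [F.as_sum, map_sum]
  simp only [homogenization_monomial]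

theorem isHomogeneous_homogenization {d : ℕ} {F : MvPolynomial (Fin n) R}
    (hF : F.totalDegree ≤ d) : (homogenization d F).IsHomogeneous d := by
  rw [homogenization_apply]
  refine IsHomogeneous.sum _ _ _ fun s hs ↦ isHomogeneous_monomial _ ?_
  rw [degree_finsuppCons]
  exact Nat.sub_add_cancel ((le_totalDegree hs).trans hF)

/-- Restriction of a polynomial to the affine chart `z₀ = 1`. -/
noncomputable def dehomogenization : MvPolynomial (Fin (n + 1)) R →ₐ[R] MvPolynomial (Fin n) R :=
  aeval (Fin.cons 1 X : Fin (n + 1) → MvPolynomial (Fin n) R)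

theorem dehomogenization_X_zero :
    dehomogenization (X 0 : MvPolynomial (Fin (n + 1)) R) = 1 := by
  rw [dehomogenization, aeval_X, Fin.cons_zero]

theorem dehomogenization_monomial_cons (e : ℕ) (s : Fin n →₀ ℕ) (c : R) :
    dehomogenization (monomial (Finsupp.cons e s) c) = monomial s c := by
  rw [dehomogenization, aeval_monomial, monomial_eq, algebraMap_eq,
    Finsupp.prod_fintype _ _ fun _ ↦ pow_zero _, Finsupp.prod_fintype _ _ fun _ ↦ pow_zero _]
  simp only [Fin.prod_univ_succ, Fin.cons_zero, one_pow, one_mul, Fin.cons_succ,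
    Finsupp.cons_succ]

theorem dehomogenization_homogenization (d : ℕ) (F : MvPolynomial (Fin n) R) :
    dehomogenization (homogenization d F) = F := by
  conv_rhs => rw [F.as_sum]
  simp only [homogenization_apply, map_sum, dehomogenization_monomial_cons]

theorem homogenization_dehomogenization {d : ℕ} {p : MvPolynomial (Fin (n + 1)) R}
    (hp : p.IsHomogeneous d) : homogenization d (dehomogenization p) = p := by
  conv_lhs => rw [p.as_sum]
  conv_rhs => rw [p.as_sum]
  simp only [map_sum]
  refine Finset.sum_congr rfl fun t ht ↦ ?_
  obtain ⟨e, s, rfl⟩ : ∃ e s, t = Finsupp.cons e s := ⟨_, _, (Finsupp.cons_tail t).symm⟩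
  have hdeg : e + s.degree = d := by
    rw [← degree_finsuppCons]
    exact of_not_not fun h ↦ mem_support_iff.1 ht (hp.coeff_eq_zero h)
  rw [dehomogenization_monomial_cons, homogenization_monomial, ← hdeg, Nat.add_sub_cancel]

theorem totalDegree_dehomogenization_le (p : MvPolynomial (Fin (n + 1)) R) :
    (dehomogenization p).totalDegree ≤ p.totalDegree := by
  conv_lhs => rw [p.as_sum, map_sum]
  refine totalDegree_finsetSum_le fun t ht ↦ ?_
  obtain ⟨e, s, rfl⟩ : ∃ e s, t = Finsupp.cons e s := ⟨_, _, (Finsupp.cons_tail t).symm⟩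
  rw [dehomogenization_monomial_cons]
  calc (monomial s (coeff (Finsupp.cons e s) p)).totalDegree ≤ s.degree :=
        totalDegree_monomial_le _ _
    _ ≤ (Finsupp.cons e s).degree := by rw [degree_finsuppCons]; exact Nat.le_add_left _ _
    _ ≤ p.totalDegree := le_totalDegree ht

theorem eq_of_dehomogenization_eq {d : ℕ} {p q : MvPolynomial (Fin (n + 1)) R}
    (hp : p.IsHomogeneous d) (hq : q.IsHomogeneous d)
    (h : dehomogenization p = dehomogenization q) : p = q := by
  rw [← homogenization_dehomogenization hp, h, homogenization_dehomogenization hq]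

theorem exists_X_zero_pow_mul_mem_span {ι : Type*} [Finite ι]
    {f : ι → MvPolynomial (Fin (n + 1)) R} {d : ι → ℕ} (hf : ∀ j, (f j).IsHomogeneous (d j))
    {p : MvPolynomial (Fin (n + 1)) R} {D : ℕ} (hp : p.IsHomogeneous D)
    (hspan : dehomogenization p ∈ Ideal.span (Set.range fun j ↦ dehomogenization (f j))) :
    ∃ k, X 0 ^ k * p ∈ Ideal.span (Set.range f) := by
  have := Fintype.ofFinite ι
  obtain ⟨G, hG⟩ := Ideal.mem_span_range_iff_exists_fun.1 hspan
  let k := ∑ j, (d j + (G j).totalDegree)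
  have hk (j : ι) : d j + (G j).totalDegree ≤ k :=
    Finset.single_le_sum (f := fun j ↦ d j + (G j).totalDegree) (fun _ _ ↦ Nat.zero_le _)
      (Finset.mem_univ j)
  have hleft : (X 0 ^ k * p).IsHomogeneous (k + D) := (isHomogeneous_X_pow 0 k).mul hp
  have hright : (∑ j, homogenization (k + D - d j) (G j) * f j).IsHomogeneous (k + D) := by
    refine IsHomogeneous.sum _ _ _ fun j _ ↦ ?_
    have := hk j
    have := (isHomogeneous_homogenization (d := k + D - d j) (F := G j) (by lia)).mul (hf j)
    rwa [Nat.sub_add_cancel (by lia)] at this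
  have heq : X 0 ^ k * p = ∑ j, homogenization (k + D - d j) (G j) * f j := by
    refine eq_of_dehomogenization_eq hleft hright ?_
    simp only [map_mul, map_pow, dehomogenization_X_zero, one_pow, one_mul, map_sum,
      dehomogenization_homogenization, hG]
  exact ⟨k, Ideal.mem_span_range_iff_exists_fun.2 ⟨_, heq.symm⟩⟩

theorem exists_totalDegree_le_of_isSMulRegular_X_zero {R ι : Type*} [CommRing R] [Fintype ι]
    {f : ι → MvPolynomial (Fin (n + 1)) R} {d : ι → ℕ} (hf : ∀ j, (f j).IsHomogeneous (d j))
    (hreg : IsSMulRegular (MvPolynomial (Fin (n + 1)) R ⧸ Ideal.span (Set.range f))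
      (X 0 : MvPolynomial (Fin (n + 1)) R)) {Φ : MvPolynomial (Fin n) R}
    (hΦ : Φ ∈ Ideal.span (Set.range fun j ↦ dehomogenization (f j))) :
    ∃ Q : ι → MvPolynomial (Fin n) R, Φ = ∑ j, dehomogenization (f j) * Q j ∧
      ∀ j, (dehomogenization (f j) * Q j).totalDegree ≤ Φ.totalDegree := by
  let φ := homogenization Φ.totalDegree Φ
  have hφ : φ.IsHomogeneous Φ.totalDegree := isHomogeneous_homogenization le_rfl
  have dehom_φ : dehomogenization φ = Φ := dehomogenization_homogenization _ Φ
  obtain ⟨k, hk⟩ := exists_X_zero_pow_mul_mem_span hf hφ (dehom_φ ▸ hΦ)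
  have φ_mem : φ ∈ Ideal.span (Set.range f) :=
    (isSMulRegular_quotient_iff_mem_of_smul_mem _ _).1 (hreg.pow k) φ hk
  let _ := gradedAlgebra (σ := Fin (n + 1)) (R := R)
  obtain ⟨q, hφq, hq⟩ := exists_eq_sum_mul_and_mem_of_mem_span
    (homogeneousSubmodule (Fin (n + 1)) R) hf hφ φ_mem
  refine ⟨fun j ↦ dehomogenization (q j), ?_, fun j ↦ ?_⟩
  · simp only [← map_mul, ← map_sum, ← hφq, dehom_φ]
  · rw [← map_mul]
    exact (totalDegree_dehomogenization_le _).trans (IsHomogeneous.totalDegree_le (hq j))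

end Homogeneous

theorem generalized_max_noether_general {K : Type*} [Field K] {n m : ℕ}
    (F : Fin m → MvPolynomial (Fin n) K) (d : Fin m → ℕ) (hdeg : ∀ j, (F j).totalDegree ≤ d j)
    (Φ : MvPolynomial (Fin n) K)
    (hcodim : ∀ p ∈ (Ideal.span (Set.range fun j ↦ homogenization (d j) (F j))).minimalPrimes,
      ringKrullDim (MvPolynomial (Fin (n + 1)) K ⧸ p) ≤ ((n + 1 - m : ℕ) : WithBot ℕ∞))
    (hinfty : ∀ p ∈ (Ideal.span (Set.range fun j ↦ homogenization (d j) (F j))).minimalPrimes,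
      (X 0 : MvPolynomial (Fin (n + 1)) K) ∉ p)
    (hΦ : Φ ∈ Ideal.span (Set.range F)) :
    ∃ Q : Fin m → MvPolynomial (Fin n) K,
      Φ = ∑ j, F j * Q j ∧ ∀ j, (F j * Q j).totalDegree ≤ Φ.totalDegree := by
  have hf (j : Fin m) := isHomogeneous_homogenization (hdeg j)
  have hreg := isSMulRegular_quotient_span_range_X hf hcodim hinfty
  simpa only [dehomogenization_homogenization] using
    exists_totalDegree_le_of_isSMulRegular_X_zero hf hreg
      (Φ := Φ) (by simpa only [dehomogenization_homogenization] using hΦ)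

theorem homogenize_eq_homogenization (n d : ℕ) (F : MvPolynomial (Fin n) ℂ) :
    homogenize n d F = homogenization d F :=
  (homogenization_apply d F).symm

/-- Generalization of Max Nöther's theorem (Theorem 2 of the paper): if the projective
zero set of the homogenizations `f_j` of `F_1,…,F_m` has codimension `m` (every
irreducible component of its cone in `ℂ^{n+1}` has dimension `n+1−m`) and no irreducible
component is contained in the hyperplane at infinity `{z_0 = 0}` (no minimal prime of the
ideal `(f_1,…,f_m)` contains `z_0`), then every `Φ ∈ (F_1,…,F_m)` can be written
`Φ = Σ_j F_j Q_j` with `deg (F_j Q_j) ≤ deg Φ`. -/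
theorem generalized_max_noether (n m : ℕ) (F : Fin m → MvPolynomial (Fin n) ℂ)
    (d : Fin m → ℕ) (hdeg : ∀ j, (F j).totalDegree ≤ d j)
    (Φ : MvPolynomial (Fin n) ℂ)
    (hcodim : ∀ p ∈ (Ideal.span
        (Set.range fun j => homogenize n (d j) (F j))).minimalPrimes,
      ringKrullDim (MvPolynomial (Fin (n + 1)) ℂ ⧸ p) = ((n + 1 - m : ℕ) : WithBot (WithTop ℕ)))
    (hinfty : ∀ p ∈ (Ideal.span
        (Set.range fun j => homogenize n (d j) (F j))).minimalPrimes,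
      (X 0 : MvPolynomial (Fin (n + 1)) ℂ) ∉ p)
    (hΦ : Φ ∈ Ideal.span (Set.range F)) :
    ∃ Q : Fin m → MvPolynomial (Fin n) ℂ,
      Φ = ∑ j, F j * Q j ∧ ∀ j, (F j * Q j).totalDegree ≤ Φ.totalDegree := by
  simp only [homogenize_eq_homogenization] at hcodim hinfty
  exact generalized_max_noether_general F d hdeg Φ (fun p hp ↦ (hcodim p hp).le) hinfty hΦ
end
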